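/- Let $c$ and $\mu$ be fixed real numbers with $1 < c < \frac{17}{16}$ and $0 < \mu < 1$, and set $\delta = \frac{17 - 16c}{32}$ and $\xi = \frac{16c - 5}{32}$. There exist $\varepsilon_0 = \varepsilon_0(c) > 0$ and $X_0 > 0$ such that for every real $X \geq X_0$, with $D = X^{\delta}$ and $\Delta = X^{\xi - c}$, and every sieve weight $\lambda$ of level $D$, one has $\max_{\Delta \leq |\alpha| \leq \frac{1}{2}} |L(\alpha)| \leq X^{1 - \varepsilon_0}$. -/

import Mathlib

/-- `e(t) = e^{2πit}`. -/
noncomputable def e (t : ℝ) : ℂ := Complex.exp (2 * Real.pi * Complex.I * t)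

/-- A sieve weight of level `D`. -/
def IsSieveWeight (D : ℝ) (lam : ℕ → ℝ) : Prop :=
  (∀ d : ℕ, |lam d| ≤ 1) ∧ ∀ d : ℕ, (D < (d : ℝ) ∨ 2 ∣ d ∨ ¬ Squarefree d) → lam d = 0

/-- The exponential sum `L(α)` over primes `μX < p ≤ X` with `p + 2 ≡ 0 (mod d)`. -/
noncomputable def L (c μ X D : ℝ) (lam : ℕ → ℝ) (α : ℝ) : ℂ :=
  ∑ d ∈ Finset.range (⌊D⌋₊ + 1), (lam d : ℂ) *
    ∑ p ∈ (Finset.range (⌊X⌋₊ + 1)).filter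
        (fun p : ℕ => p.Prime ∧ μ * X < (p : ℝ) ∧ d ∣ (p + 2)),
      (Real.log p : ℂ) * e (α * ⌊(p : ℝ) ^ c⌋)

/-!
The key estimate is a bound `X ^ (31 / 32)`, up to powers of `log X`, for
`∑ Λ(n) e(α ⌊n ^ c⌋ + β n)` over `μ X < n ≤ X`, uniform in the real number `β`. Uniformity in `β`
makes the congruence `p + 2 ≡ 0 (mod d)` harmless: it is detected by the additive characters modulo
`d` at no cost. Prime powers contribute `O(√X log X)`. Summing trivially over
`d ≤ X ^ ((17 - 16 c) / 32)` gives the exponent `31 / 32 + (17 - 16 c) / 32 = 1 - (c - 1) / 2 < 1`.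

To remove the integer part, write `e(α ⌊y⌋) = e(α y) e(-α {y})` and approximate `e(-α {y})` by a
Fejér mean (with the Fourier coefficients replaced by averages over finitely many nodes, so that no
integrals occur). The coefficients have total mass `O(log X)`, and the error is large only near the
jump of `{y}`, where it is majorised by another Fejér kernel. What remains are sums with phase
`θ n ^ c + β n` where `X ^ (11 / 32) ≤ |θ| X ^ c ≤ X ^ (38 / 32)`.

These are treated by Vaughan's identity with `U = X ^ (1 / 16)`. In the type I sums the short
variable is at most `X ^ (1 / 8)`, and van der Corput's second derivative test in the long variable
suffices. In the type II sums both variables exceed `X ^ (1 / 16)`; on each dyadic box Cauchy's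
inequality and van der Corput's shifts in the shorter variable lead to correlations in the longer
variable, whose phases `A m ^ c + B m` are again covered by the second derivative test. That test
follows from the Kuzmin–Landau inequality; in terms of second differences of the phase the linear
terms drop out at once.
-/

section

open Finset Real ComplexConjugate fwdDiff

/-! ### The additive character -/

lemma e_eq_fourierChar (t : ℝ) : e t = fourierChar t := by
  rw [e, fourierChar_apply]
  push_cast
  ring_nf

lemma e_zero : e 0 = 1 := by simp [e]

lemma e_add (s t : ℝ) : e (s + t) = e s * e t := by
  simp only [e_eq_fourierChar, AddChar.map_add_eq_mul, Circle.coe_mul]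

lemma e_neg (t : ℝ) : e (-t) = conj (e t) := by
  simp only [e_eq_fourierChar, Circle.starRingEnd_addChar]

lemma norm_e (t : ℝ) : ‖e t‖ = 1 := by
  rw [e_eq_fourierChar, Circle.norm_coe]

lemma e_mul_natCast (t : ℝ) (n : ℕ) : e (t * n) = e t ^ n := by
  rw [mul_comm, ← nsmul_eq_mul, e_eq_fourierChar, AddChar.map_nsmul_eq_pow, Circle.coe_pow,
    e_eq_fourierChar]

lemma e_intCast (k : ℤ) : e k = 1 := by
  rw [e, ← Complex.exp_int_mul_two_pi_mul_I k]
  push_cast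
  ring_nf

lemma e_add_intCast (t : ℝ) (k : ℤ) : e (t + k) = e t := by
  rw [e_add, e_intCast, mul_one]

lemma e_eq_one_iff {t : ℝ} : e t = 1 ↔ ∃ k : ℤ, t = k := by
  refine ⟨fun h => ?_, fun ⟨k, hk⟩ => hk ▸ e_intCast k⟩
  obtain ⟨k, hk⟩ := Complex.exp_eq_one_iff.1 h
  refine ⟨k, ?_⟩
  have hk' : (t : ℂ) * (2 * π * Complex.I) = k * (2 * π * Complex.I) := by rw [← hk]; ring
  exact_mod_cast mul_right_cancel₀ Complex.two_pi_I_ne_zero hk'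

lemma norm_e_sub_one (t : ℝ) : ‖e t - 1‖ = 2 * |sin (π * t)| := by
  rw [e_eq_fourierChar, fourierChar_apply, mul_comm, Complex.norm_exp_I_mul_ofReal_sub_one,
    norm_eq_abs, abs_mul, abs_two, mul_assoc, mul_div_cancel_left₀ _ two_ne_zero]

lemma norm_e_sub_one_le (t : ℝ) : ‖e t - 1‖ ≤ 2 * π * |t| := by
  have hsin : |sin (π * t)| ≤ |π * t| := abs_sin_le_abs
  rw [abs_mul, abs_of_pos pi_pos] at hsin
  rw [norm_e_sub_one]
  linarith

lemma norm_e_sub_e_le (s t : ℝ) : ‖e s - e t‖ ≤ 2 * π * |s - t| := by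
  have hfactor : e s - e t = e t * (e (s - t) - 1) := by
    rw [mul_sub, mul_one, ← e_add, add_sub_cancel]
  rw [hfactor, norm_mul, norm_e, one_mul]
  exact norm_e_sub_one_le _

lemma two_mul_le_sin_pi_mul {κ t : ℝ} (hκ : 0 ≤ κ) (hlo : κ ≤ t) (hhi : t ≤ 1 - κ) :
    2 * κ ≤ sin (π * t) := by
  have jordan : ∀ s, κ ≤ s → s ≤ 1 / 2 → 2 * κ ≤ sin (π * s) := fun s hs hs' => by
    have hle := mul_le_sin (x := π * s) (mul_nonneg pi_pos.le (hκ.trans hs))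
      (by nlinarith [pi_pos])
    rw [← mul_assoc, div_mul_cancel₀ _ pi_ne_zero] at hle
    linarith
  rcases le_total t (1 / 2) with ht | ht
  · exact jordan t hlo ht
  · have hreflect := jordan (1 - t) (by linarith) (by linarith)
    rwa [mul_sub, mul_one, sin_pi_sub] at hreflect

lemma four_mul_le_norm_e_sub_one {κ t : ℝ} (hκ : 0 ≤ κ) (hlo : κ ≤ |t|) (hhi : |t| ≤ 1 - κ) :
    4 * κ ≤ ‖e t - 1‖ := by
  have habs : |sin (π * t)| = |sin (π * |t|)| := by
    rcases abs_choice t with h | h <;> rw [h]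
    rw [mul_neg, sin_neg, abs_neg]
  rw [norm_e_sub_one, habs]
  linarith [le_abs_self (sin (π * |t|)), two_mul_le_sin_pi_mul hκ hlo hhi]

lemma norm_sum_range_e_mul_le {t κ : ℝ} (hκ : 0 < κ) (h : κ ≤ ‖e t - 1‖) (N : ℕ) :
    ‖∑ a ∈ range N, e (t * a)‖ ≤ 2 / κ := by
  have hne : e t ≠ 1 := fun h0 => by simp only [h0, sub_self, norm_zero] at h; linarith
  have hnum : ‖e t ^ N - 1‖ ≤ 2 :=
    (norm_sub_le _ _).trans (by rw [norm_pow, norm_e, one_pow, norm_one, one_add_one_eq_two])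
  simp_rw [e_mul_natCast]
  rw [geom_sum_eq hne, norm_div]
  gcongr

lemma sum_range_e_div_mul {K : ℕ} (hK : 0 < K) (h : ℤ) :
    ∑ j ∈ range K, e (h / K * j) = if (K : ℤ) ∣ h then (K : ℂ) else 0 := by
  have hK0 : (K : ℝ) ≠ 0 := mod_cast hK.ne'
  simp_rw [e_mul_natCast]
  split_ifs with hdvd
  · obtain ⟨k, rfl⟩ := hdvd
    have hone : e (((K * k : ℤ) : ℝ) / K) = 1 :=
      e_eq_one_iff.2 ⟨k, by push_cast; field_simp⟩
    simp only [hone, one_pow, sum_const, card_range, nsmul_eq_mul, mul_one]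
  · have hne : e (h / K) ≠ 1 := fun hone => by
      obtain ⟨k, hk⟩ := e_eq_one_iff.1 hone
      rw [div_eq_iff hK0] at hk
      exact hdvd ⟨k, by rw [mul_comm]; exact_mod_cast hk⟩
    rw [geom_sum_eq hne, ← e_mul_natCast, div_mul_cancel₀ _ hK0, e_intCast, sub_self, zero_div]

/-! ### The Kuzmin–Landau inequality -/

section AbelSummation

variable {N : ℕ} {w : ℕ → ℝ} {z : ℕ → ℂ} {A B : ℝ}

lemma norm_sum_range_mul_le_of_monotone (hmono : ∀ n, n + 1 < N → w n ≤ w (n + 1)) (hB0 : 0 ≤ B)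
    (hB : ∀ n < N, |w n| ≤ B) (hA : ∀ n ≤ N, ‖∑ i ∈ range n, z i‖ ≤ A) :
    ‖∑ n ∈ range N, (w n : ℂ) * z n‖ ≤ 3 * A * B := by
  have hA0 : 0 ≤ A := (norm_nonneg _).trans (hA 0 N.zero_le)
  rcases N.eq_zero_or_pos with rfl | hN
  · simp only [range_zero, sum_empty, norm_zero]
    positivity
  have hlast : ‖(w (N - 1) : ℂ) * ∑ i ∈ range N, z i‖ ≤ B * A := by
    rw [norm_mul, Complex.norm_real, norm_eq_abs]
    exact mul_le_mul (hB _ (by omega)) (hA N le_rfl) (norm_nonneg _) hB0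
  have hrest : ‖∑ i ∈ range (N - 1), ((w (i + 1) : ℂ) - w i) * ∑ j ∈ range (i + 1), z j‖
      ≤ 2 * B * A :=
    calc _ ≤ ∑ i ∈ range (N - 1), (w (i + 1) - w i) * A := norm_sum_le_of_le _ fun i hi => by
            rw [mem_range] at hi
            have hstep : 0 ≤ w (i + 1) - w i := sub_nonneg.2 (hmono i (by omega))
            rw [norm_mul, ← Complex.ofReal_sub, Complex.norm_real, norm_of_nonneg hstep]
            exact mul_le_mul_of_nonneg_left (hA _ (by omega)) hstep
      _ = (w (N - 1) - w 0) * A := by rw [← sum_mul, sum_range_sub]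
      _ ≤ 2 * B * A := by
            have hfirst := abs_le.1 (hB 0 hN)
            have hlast := abs_le.1 (hB (N - 1) (by omega))
            gcongr
            linarith
  have hparts := sum_range_by_parts (fun n => (w n : ℂ)) z N
  simp only [smul_eq_mul] at hparts
  rw [hparts]
  linarith [norm_sub_le ((w (N - 1) : ℂ) * ∑ i ∈ range N, z i)
    (∑ i ∈ range (N - 1), ((w (i + 1) : ℂ) - w i) * ∑ j ∈ range (i + 1), z j)]

lemma norm_sum_range_mul_le_of_antitone (hanti : ∀ n, n + 1 < N → w (n + 1) ≤ w n) (hB0 : 0 ≤ B)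
    (hB : ∀ n < N, |w n| ≤ B) (hA : ∀ n ≤ N, ‖∑ i ∈ range n, z i‖ ≤ A) :
    ‖∑ n ∈ range N, (w n : ℂ) * z n‖ ≤ 3 * A * B := by
  have hneg := norm_sum_range_mul_le_of_monotone (w := -w)
    (fun n hn => neg_le_neg (hanti n hn)) hB0 (fun n hn => (abs_neg (w n)).trans_le (hB n hn)) hA
  simpa only [Pi.neg_apply, Complex.ofReal_neg, neg_mul, sum_neg_distrib, norm_neg] using hneg

end AbelSummation

lemma antitoneOn_cot : AntitoneOn cot (Set.Ioo 0 π) := fun x hx y hy hxy => by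
  have hsin := sin_nonneg_of_nonneg_of_le_pi (x := y - x) (by linarith) (by linarith [hx.1, hy.2])
  rw [sin_sub] at hsin
  rw [cot_eq_cos_div_sin, cot_eq_cos_div_sin,
    div_le_div_iff₀ (sin_pos_of_mem_Ioo hy) (sin_pos_of_mem_Ioo hx)]
  linarith

lemma abs_cot_pi_mul_le {κ t : ℝ} (hκ : 0 < κ) (hlo : κ ≤ t) (hhi : t ≤ 1 - κ) :
    |cot (π * t)| ≤ 1 / (2 * κ) := by
  have hsin := two_mul_le_sin_pi_mul hκ.le hlo hhi
  rw [cot_eq_cos_div_sin, abs_div, abs_of_pos (by linarith : 0 < sin (π * t))]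
  exact div_le_div₀ zero_le_one (abs_cos_le_one _) (by positivity) hsin

lemma inv_e_sub_one {t : ℝ} (h : sin (π * t) ≠ 0) :
    (e t - 1)⁻¹ = -1 / 2 - Complex.I / 2 * cot (π * t) := by
  have he : e t = (cos (π * t) + sin (π * t) * Complex.I) ^ 2 := by
    rw [e, Complex.ofReal_cos, Complex.ofReal_sin, ← Complex.exp_mul_I, ← Complex.exp_nat_mul]
    push_cast
    ring_nf
  have hs : (sin (π * t) : ℂ) ≠ 0 := mod_cast h
  have hcs : (sin (π * t) : ℂ) ^ 2 + (cos (π * t) : ℂ) ^ 2 = 1 :=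
    mod_cast sin_sq_add_cos_sq (π * t)
  have hfactor : e t - 1
      = 2 * sin (π * t) * Complex.I * (cos (π * t) + sin (π * t) * Complex.I) := by
    rw [he]
    linear_combination hcs - (sin (π * t) : ℂ) ^ 2 * Complex.I_sq
  refine inv_eq_of_mul_eq_one_right ?_
  rw [hfactor, cot_eq_cos_div_sin, Complex.ofReal_div]
  field_simp
  linear_combination -Complex.I ^ 2 * hcs
    - (1 + Complex.I * cos (π * t) * sin (π * t)) * Complex.I_sq

lemma norm_sum_range_e_le_of_fwdDiff_mem_Icc {N : ℕ} {f : ℕ → ℝ} {κ : ℝ} (hκ : 0 < κ)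
    (hmono : ∀ n, n + 1 < N → Δ_[1] f n ≤ Δ_[1] f (n + 1))
    (hmem : ∀ n < N, Δ_[1] f n ∈ Set.Icc κ (1 - κ)) :
    ‖∑ n ∈ range N, e (f n)‖ ≤ 2 / κ := by
  rcases N.eq_zero_or_pos with rfl | hN
  · simp only [range_zero, sum_empty, norm_zero]
    positivity
  have hκ2 : κ ≤ 1 / 2 := by linarith [(hmem 0 hN).1, (hmem 0 hN).2]
  have htelescope : ∀ n, ‖∑ i ∈ range n, (e (f (i + 1)) - e (f i))‖ ≤ 2 := fun n => by
    rw [sum_range_sub (fun i => e (f i))]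
    exact (norm_sub_le _ _).trans (by rw [norm_e, norm_e, one_add_one_eq_two])
  have hcot : ‖∑ n ∈ range N, (cot (π * Δ_[1] f n) : ℂ) * (e (f (n + 1)) - e (f n))‖
      ≤ 3 * 2 * (1 / (2 * κ)) := by
    have hIoo : ∀ n < N, π * Δ_[1] f n ∈ Set.Ioo 0 π := fun n hn =>
      ⟨mul_pos pi_pos (by linarith [(hmem n hn).1]), by nlinarith [(hmem n hn).2, pi_pos]⟩
    refine norm_sum_range_mul_le_of_antitone (fun n hn => ?_) (by positivity)
      (fun n hn => abs_cot_pi_mul_le hκ (hmem n hn).1 (hmem n hn).2) fun n _ => htelescope n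
    exact antitoneOn_cot (hIoo n (by omega)) (hIoo _ hn)
      (mul_le_mul_of_nonneg_left (hmono n hn) pi_pos.le)
  -- Dividing by `e (Δf n) - 1` makes the sum telescope up to the monotone weight `cot`.
  have hterm : ∀ n ∈ range N, e (f n) = -1 / 2 * (e (f (n + 1)) - e (f n))
      - Complex.I / 2 * ((cot (π * Δ_[1] f n) : ℂ) * (e (f (n + 1)) - e (f n))) := fun n hn => by
    have hn := hmem n (mem_range.1 hn)
    have hsin : sin (π * Δ_[1] f n) ≠ 0 :=
      ne_of_gt (by linarith [two_mul_le_sin_pi_mul hκ.le hn.1 hn.2])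
    have hne : e (Δ_[1] f n) - 1 ≠ 0 := by
      rw [← norm_ne_zero_iff, norm_e_sub_one]
      exact mul_ne_zero two_ne_zero (abs_ne_zero.2 hsin)
    have hincr : e (f (n + 1)) - e (f n) = e (f n) * (e (Δ_[1] f n) - 1) := by
      rw [mul_sub_one, ← e_add, fwdDiff, add_sub_cancel]
    rw [hincr, ← mul_assoc (Complex.I / 2), ← sub_mul, ← inv_e_sub_one hsin]
    field_simp
  rw [sum_congr rfl hterm, sum_sub_distrib, ← mul_sum, ← mul_sum]
  calc _ ≤ 1 / 2 * 2 + 1 / 2 * (3 * 2 * (1 / (2 * κ))) := by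
        refine norm_sub_le_of_le ?_ ?_ <;> rw [norm_mul]
        · exact mul_le_mul (by norm_num) (htelescope N) (norm_nonneg _) (by norm_num)
        · exact mul_le_mul (by norm_num) hcot (norm_nonneg _) (by norm_num)
    _ ≤ 2 / κ := by
        field_simp
        linarith

lemma norm_sum_range_e_le_of_fwdDiff_mem_Icc_add_int {N : ℕ} {f : ℕ → ℝ} {κ : ℝ} {k : ℤ}
    (hκ : 0 < κ) (hmono : ∀ n, n + 1 < N → Δ_[1] f n ≤ Δ_[1] f (n + 1))
    (hmem : ∀ n < N, Δ_[1] f n ∈ Set.Icc (k + κ) (k + 1 - κ)) :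
    ‖∑ n ∈ range N, e (f n)‖ ≤ 2 / κ := by
  have hshift : ∀ n, e (f n) = e (f n - k * n) := fun n => by
    rw [← e_add_intCast (f n - k * n) (k * n)]
    push_cast
    ring_nf
  have hdiff : ∀ n, Δ_[1] (fun n : ℕ => f n - k * n) n = Δ_[1] f n - k := fun n => by
    simp only [fwdDiff, Nat.cast_add, Nat.cast_one]
    ring
  simp_rw [hshift]
  refine norm_sum_range_e_le_of_fwdDiff_mem_Icc hκ (fun n hn => ?_) fun n hn => ?_
  · rw [hdiff, hdiff]
    linarith [hmono n hn]
  · rw [hdiff]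
    constructor <;> linarith [(hmem n hn).1, (hmem n hn).2]

/-! ### Van der Corput's second derivative test -/

lemma exists_eq_Ico_of_ordConnected (s : Finset ℕ) (hs : (s : Set ℕ).OrdConnected) :
    ∃ x y, s = Ico x y := by
  rcases s.eq_empty_or_nonempty with rfl | hne
  · exact ⟨0, 0, rfl⟩
  refine ⟨s.min' hne, s.max' hne + 1, Subset.antisymm (fun n hn => ?_) fun n hn => ?_⟩
  · exact mem_Ico.2 ⟨s.min'_le n hn, Nat.lt_succ_of_le (s.le_max' n hn)⟩
  · rw [mem_Ico, Nat.lt_succ_iff] at hn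
    exact hs.out (s.min'_mem hne) (s.max'_mem hne) hn

lemma card_le_of_separated {s : Finset ℕ} {a : ℕ → ℝ} {κ lam u : ℝ} (hlam : 0 < lam)
    (hκ : 0 ≤ κ) (hsep : ∀ i ∈ s, ∀ j ∈ s, i ≤ j → lam * ((j : ℝ) - i) ≤ a j - a i)
    (hmem : ∀ n ∈ s, a n ∈ Set.Icc u (u + κ)) : (#s : ℝ) ≤ κ / lam + 1 := by
  rcases s.eq_empty_or_nonempty with rfl | hne
  · simp only [card_empty, Nat.cast_zero]
    positivity
  have hmin := s.min'_mem hne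
  have hmax := s.max'_mem hne
  have hspan : (s.max' hne : ℝ) - s.min' hne ≤ κ / lam := by
    rw [le_div_iff₀ hlam]
    linarith [hsep _ hmin _ hmax (s.min'_le_max' hne), (hmem _ hmin).1, (hmem _ hmax).2]
  have hcard : (#s : ℝ) + s.min' hne ≤ s.max' hne + 1 := by
    have hIcc : s ⊆ Icc (s.min' hne) (s.max' hne) :=
      fun n hn => mem_Icc.2 ⟨s.min'_le n hn, s.le_max' n hn⟩
    have hle := card_le_card hIcc
    have hminmax := s.min'_le_max' hne
    rw [Nat.card_Icc] at hle
    exact_mod_cast (by omega : #s + s.min' hne ≤ s.max' hne + 1)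
  linarith

lemma mul_sub_le_sub_of_le_fwdDiff {N : ℕ} {a : ℕ → ℝ} {lam : ℝ}
    (h : ∀ n < N, lam ≤ Δ_[1] a n) {i j : ℕ} (hij : i ≤ j) (hj : j ≤ N) :
    lam * ((j : ℝ) - i) ≤ a j - a i := by
  induction j, hij using Nat.le_induction with
  | base => simp only [sub_self, mul_zero, le_refl]
  | succ j _ ih =>
    have hstep := h j hj
    rw [fwdDiff] at hstep
    push_cast
    linarith [ih (by omega)]

lemma sub_le_mul_sub_of_fwdDiff_le {N : ℕ} {a : ℕ → ℝ} {Lam : ℝ}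
    (h : ∀ n < N, Δ_[1] a n ≤ Lam) {i j : ℕ} (hij : i ≤ j) (hj : j ≤ N) :
    a j - a i ≤ Lam * ((j : ℝ) - i) := by
  have hneg := mul_sub_le_sub_of_le_fwdDiff (a := fun n => -a n) (lam := -Lam)
    (fun n hn => by have := h n hn; simp only [fwdDiff] at this ⊢; linarith) hij hj
  linarith

section SecondDifferenceTest

variable {N : ℕ} {f : ℕ → ℝ} {lam : ℝ}

lemma fwdDiff_le_fwdDiff (hlam : 0 ≤ lam) (hlo : ∀ n < N, lam ≤ Δ_[1] (Δ_[1] f) n) {i j : ℕ}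
    (hij : i ≤ j) (hj : j ≤ N) : Δ_[1] f i ≤ Δ_[1] f j := by
  have hcast : (i : ℝ) ≤ j := mod_cast hij
  linarith [mul_sub_le_sub_of_le_fwdDiff hlo hij hj, mul_nonneg hlam (sub_nonneg.2 hcast)]

lemma norm_sum_e_filter_fwdDiff_mem_Icc_le {κ : ℝ} (hlam : 0 ≤ lam) (hκ : 0 < κ)
    (hlo : ∀ n < N, lam ≤ Δ_[1] (Δ_[1] f) n) (k : ℤ) :
    ‖∑ n ∈ range N with Δ_[1] f n ∈ Set.Icc (k + κ) (k + 1 - κ), e (f n)‖ ≤ 2 / κ := by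
  classical
  set s := {n ∈ range N | Δ_[1] f n ∈ Set.Icc (k + κ) (k + 1 - κ)} with hs
  have hmem : ∀ n ∈ s, n < N ∧ Δ_[1] f n ∈ Set.Icc (k + κ) (k + 1 - κ) := fun n hn => by
    rwa [hs, mem_filter, mem_range] at hn
  have hord : (s : Set ℕ).OrdConnected := ⟨fun i hi j hj n hn => by
    have hnN : n < N := hn.2.trans_lt (hmem j hj).1
    rw [mem_coe, hs, mem_filter, mem_range]
    exact ⟨hnN, (hmem i hi).2.1.trans (fwdDiff_le_fwdDiff hlam hlo hn.1 hnN.le),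
      (fwdDiff_le_fwdDiff hlam hlo hn.2 (hmem j hj).1.le).trans (hmem j hj).2.2⟩⟩
  obtain ⟨x, y, hxy⟩ := exists_eq_Ico_of_ordConnected s hord
  have hin : ∀ n < y - x, x + n ∈ s := fun n hn => by
    rw [hxy, mem_Ico]
    omega
  rw [hxy, sum_Ico_eq_sum_range]
  exact norm_sum_range_e_le_of_fwdDiff_mem_Icc_add_int (f := fun n => f (x + n)) hκ
    (fun n hn => fwdDiff_le_fwdDiff hlam hlo (Nat.le_succ _) (hmem _ (hin _ hn)).1.le)
    fun n hn => (hmem _ (hin n hn)).2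

lemma card_filter_fwdDiff_near_int_le {κ : ℝ} (hlam : 0 < lam) (hκ : 0 ≤ κ)
    (hlo : ∀ n < N, lam ≤ Δ_[1] (Δ_[1] f) n) (k : ℤ) :
    (#{n ∈ range N | ⌊Δ_[1] f n⌋ = k ∧ Δ_[1] f n ∉ Set.Icc (k + κ) (k + 1 - κ)} : ℝ)
      ≤ 2 * (κ / lam + 1) := by
  classical
  have hshort : ∀ u : ℝ, (#{n ∈ range N | Δ_[1] f n ∈ Set.Icc u (u + κ)} : ℝ) ≤ κ / lam + 1 :=
    fun u => card_le_of_separated hlam hκ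
      (fun i _ j hj hij => mul_sub_le_sub_of_le_fwdDiff hlo hij
        (mem_range.1 (mem_filter.1 hj).1).le)
      fun n hn => (mem_filter.1 hn).2
  have hsub : {n ∈ range N | ⌊Δ_[1] f n⌋ = k ∧ Δ_[1] f n ∉ Set.Icc (k + κ) (k + 1 - κ)}
      ⊆ {n ∈ range N | Δ_[1] f n ∈ Set.Icc (k : ℝ) (k + κ)} ∪
        {n ∈ range N | Δ_[1] f n ∈ Set.Icc (k + 1 - κ) (k + 1 - κ + κ)} := fun n hn => by
    simp only [mem_filter, mem_union, Set.mem_Icc, Int.floor_eq_iff, not_and_or, not_le] at hn ⊢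
    obtain ⟨hnN, ⟨hk, hk'⟩, hlt | hlt⟩ := hn
    · exact Or.inl ⟨hnN, hk, hlt.le⟩
    · exact Or.inr ⟨hnN, hlt.le, by linarith⟩
  have hcard : (#{n ∈ range N | ⌊Δ_[1] f n⌋ = k ∧ Δ_[1] f n ∉ Set.Icc (k + κ) (k + 1 - κ)} : ℝ)
      ≤ #{n ∈ range N | Δ_[1] f n ∈ Set.Icc (k : ℝ) (k + κ)}
        + #{n ∈ range N | Δ_[1] f n ∈ Set.Icc (k + 1 - κ) (k + 1 - κ + κ)} :=
    mod_cast (card_le_card hsub).trans (card_union_le _ _)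
  linarith [hshort k, hshort (k + 1 - κ)]

lemma norm_sum_e_filter_floor_fwdDiff_eq_le (hlam : 0 < lam) (hlam1 : lam ≤ 1)
    (hlo : ∀ n < N, lam ≤ Δ_[1] (Δ_[1] f) n) (k : ℤ) :
    ‖∑ n ∈ range N with ⌊Δ_[1] f n⌋ = k, e (f n)‖ ≤ 7 / √lam := by
  classical
  have hsqrt : 0 < √lam := sqrt_pos.2 hlam
  have hκ : 0 < √lam / 2 := by positivity
  have hmid := norm_sum_e_filter_fwdDiff_mem_Icc_le hlam.le hκ hlo k
  have hends := card_filter_fwdDiff_near_int_le hlam hκ.le hlo k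
  rw [← sum_filter_add_sum_filter_not _
    (fun n => Δ_[1] f n ∈ Set.Icc (k + √lam / 2) (k + 1 - √lam / 2)), filter_filter, filter_filter]
  have hfloor : {n ∈ range N | ⌊Δ_[1] f n⌋ = k ∧
        Δ_[1] f n ∈ Set.Icc (k + √lam / 2) (k + 1 - √lam / 2)}
      = {n ∈ range N | Δ_[1] f n ∈ Set.Icc (k + √lam / 2) (k + 1 - √lam / 2)} :=
    filter_congr fun n _ => and_iff_right_of_imp fun h =>
      Int.floor_eq_iff.2 ⟨by linarith [h.1], by linarith [h.2]⟩
  rw [hfloor]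
  calc _ ≤ 2 / (√lam / 2) + 2 * (√lam / 2 / lam + 1) :=
        norm_add_le_of_le hmid ((norm_sum_le _ _).trans (by simpa [norm_e] using hends))
    _ = 5 / √lam + 2 := by
        field_simp
        linear_combination mul_self_sqrt hlam.le
    _ ≤ 5 / √lam + 2 * (1 / √lam) := by
        have hone : 1 ≤ 1 / √lam := by rwa [le_div_iff₀ hsqrt, one_mul, sqrt_le_one]
        linarith
    _ = 7 / √lam := by ring

lemma norm_sum_range_e_le_of_fwdDiff_fwdDiff {Lam : ℝ} (hlam : 0 < lam)
    (hlo : ∀ n < N, lam ≤ Δ_[1] (Δ_[1] f) n) (hhi : ∀ n < N, Δ_[1] (Δ_[1] f) n ≤ Lam) :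
    ‖∑ n ∈ range N, e (f n)‖ ≤ 7 * (Lam * N + 2) / √lam := by
  classical
  rcases N.eq_zero_or_pos with rfl | hN
  · simp only [range_zero, sum_empty, norm_zero, Nat.cast_zero, mul_zero, zero_add]
    positivity
  have hLam : lam ≤ Lam := (hlo 0 hN).trans (hhi 0 hN)
  have hsqrt : 0 < √lam := sqrt_pos.2 hlam
  rcases lt_or_ge 1 lam with hlam1 | hlam1
  · calc _ ≤ (N : ℝ) := (norm_sum_le _ _).trans (by simp [norm_e])
      _ ≤ 7 * (Lam * N + 2) / √lam := by
        have hle : √lam ≤ Lam := ((sqrt_le_left (by linarith)).2 (by nlinarith)).trans hLam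
        rw [le_div_iff₀ hsqrt]
        nlinarith [mul_le_mul_of_nonneg_right hle N.cast_nonneg]
  have hmaps : ∀ n ∈ range N, ⌊Δ_[1] f n⌋ ∈ Icc ⌊Δ_[1] f 0⌋ ⌊Δ_[1] f N⌋ := fun n hn =>
    have hn := (mem_range.1 hn).le
    mem_Icc.2 ⟨Int.floor_mono (fwdDiff_le_fwdDiff hlam.le hlo n.zero_le hn),
      Int.floor_mono (fwdDiff_le_fwdDiff hlam.le hlo hn le_rfl)⟩
  have hcount : (#(Icc ⌊Δ_[1] f 0⌋ ⌊Δ_[1] f N⌋) : ℝ) ≤ Lam * N + 2 := by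
    have hle := Int.floor_mono (fwdDiff_le_fwdDiff hlam.le hlo N.zero_le le_rfl)
    have hspan := sub_le_mul_sub_of_fwdDiff_le hhi N.zero_le le_rfl
    rw [← Int.cast_natCast, Int.card_Icc_of_le _ _ (by omega)]
    push_cast at hspan ⊢
    linarith [Int.floor_le (Δ_[1] f N), Int.lt_floor_add_one (Δ_[1] f 0)]
  calc _ ≤ ∑ _k ∈ Icc ⌊Δ_[1] f 0⌋ ⌊Δ_[1] f N⌋, 7 / √lam := by
        rw [← sum_fiberwise_of_maps_to hmaps]
        exact norm_sum_le_of_le _ fun k _ =>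
          norm_sum_e_filter_floor_fwdDiff_eq_le hlam hlam1 hlo k
    _ ≤ (Lam * N + 2) * (7 / √lam) := by
        rw [sum_const, nsmul_eq_mul]
        gcongr
    _ = 7 * (Lam * N + 2) / √lam := by ring

end SecondDifferenceTest

lemma exists_rpow_secondDiff_eq (c : ℝ) {x : ℝ} (hx : 0 < x) :
    ∃ s ∈ Set.Ioo x (x + 2),
      (x + 2) ^ c - 2 * (x + 1) ^ c + x ^ c = c * (c - 1) * s ^ (c - 2) := by
  have hderiv : ∀ t, 0 < t → HasDerivAt (fun t : ℝ => (t + 1) ^ c - t ^ c)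
      (c * (t + 1) ^ (c - 1) - c * t ^ (c - 1)) t := fun t ht =>
    ((hasDerivAt_rpow_const (Or.inl (by positivity))).comp_add_const t 1).sub
      (hasDerivAt_rpow_const (Or.inl ht.ne'))
  have hderiv' : ∀ t, 0 < t → HasDerivAt (fun t : ℝ => c * t ^ (c - 1))
      (c * ((c - 1) * t ^ (c - 1 - 1))) t := fun t ht =>
    (hasDerivAt_rpow_const (Or.inl ht.ne')).const_mul c
  obtain ⟨t, ht, hteq⟩ := exists_hasDerivAt_eq_slope _ _ (lt_add_one x)
    (fun s hs => (hderiv s (hx.trans_le hs.1)).continuousAt.continuousWithinAt)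
    fun s hs => hderiv s (hx.trans hs.1)
  have ht0 : 0 < t := hx.trans ht.1
  obtain ⟨s, hs, hseq⟩ := exists_hasDerivAt_eq_slope _ _ (lt_add_one t)
    (fun s hs => (hderiv' s (ht0.trans_le hs.1)).continuousAt.continuousWithinAt)
    fun s hs => hderiv' s (ht0.trans hs.1)
  refine ⟨s, ⟨ht.1.trans hs.1, by linarith [hs.2, ht.2]⟩, ?_⟩
  have htwo : x + 1 + 1 = x + 2 := by ring
  have hexp : c - 1 - 1 = c - 2 := by ring
  simp only [add_sub_cancel_left, div_one, htwo, hexp] at hteq hseq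
  linarith

lemma rpow_secondDiff_mem_Icc {c x M R : ℝ} (hc1 : 1 ≤ c) (hc2 : c ≤ 2) (hM : 0 < M)
    (hR : 0 ≤ R) (hMx : M ≤ x) (hxR : x + 2 ≤ R * M) :
    (x + 2) ^ c - 2 * (x + 1) ^ c + x ^ c ∈
      Set.Icc (c * (c - 1) * (R ^ (c - 2) * M ^ (c - 2))) (c * (c - 1) * M ^ (c - 2)) := by
  obtain ⟨s, hs, hseq⟩ := exists_rpow_secondDiff_eq c (hM.trans_le hMx)
  have hc : 0 ≤ c * (c - 1) := mul_nonneg (by linarith) (by linarith)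
  have hs0 : 0 < s := (hM.trans_le hMx).trans hs.1
  rw [hseq, ← mul_rpow hR hM.le]
  exact ⟨mul_le_mul_of_nonneg_left
      (rpow_le_rpow_of_nonpos hs0 (hs.2.le.trans hxR) (by linarith)) hc,
    mul_le_mul_of_nonneg_left
      (rpow_le_rpow_of_nonpos hM (hMx.trans hs.1.le) (by linarith)) hc⟩

/-- The oscillating factor `e(θ n ^ c + β n)`. The free linear term `β n` is what later detects
congruence conditions on `n`. -/
noncomputable def twist (c θ β : ℝ) (n : ℕ) : ℂ := e (θ * (n : ℝ) ^ c + β * n)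

lemma norm_twist (c θ β : ℝ) (n : ℕ) : ‖twist c θ β n‖ = 1 := norm_e _

lemma conj_twist (c θ β : ℝ) (n : ℕ) : conj (twist c θ β n) = twist c (-θ) (-β) n := by
  rw [twist, twist, ← e_neg]
  ring_nf

lemma twist_mul (c θ β : ℝ) (m n : ℕ) :
    twist c θ β (m * n) = twist c (θ * (n : ℝ) ^ c) (β * n) m := by
  rw [twist, twist, Nat.cast_mul, mul_rpow m.cast_nonneg n.cast_nonneg]
  ring_nf

lemma twist_mul_twist (c θ θ' β β' : ℝ) (n : ℕ) :
    twist c θ β n * twist c θ' β' n = twist c (θ + θ') (β + β') n := by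
  rw [twist, twist, twist, ← e_add]
  ring_nf

lemma fwdDiff_fwdDiff_phase_mem_Icc {c R θ β M : ℝ} {a n : ℕ} (hc1 : 1 ≤ c) (hc2 : c ≤ 2)
    (hR : 0 ≤ R) (hθ : 0 ≤ θ) (hM : 0 < M) (ha : M ≤ a) (hb : ((a + n : ℕ) : ℝ) + 2 ≤ R * M) :
    Δ_[1] (Δ_[1] fun n : ℕ => θ * ((a + n : ℕ) : ℝ) ^ c + β * ((a + n : ℕ) : ℝ)) n ∈
      Set.Icc (c * (c - 1) * R ^ (c - 2) * (θ * M ^ c / M ^ 2))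
        (c * (c - 1) * (θ * M ^ c / M ^ 2)) := by
  have hpow : θ * M ^ c / M ^ 2 = θ * M ^ (c - 2) := by
    rw [rpow_sub hM, rpow_two, mul_div_assoc]
  have hlow : (a : ℝ) ≤ ((a + n : ℕ) : ℝ) := mod_cast Nat.le_add_right a n
  have hval : Δ_[1] (Δ_[1] fun n : ℕ => θ * ((a + n : ℕ) : ℝ) ^ c + β * ((a + n : ℕ) : ℝ)) n
      = θ * ((((a + n : ℕ) : ℝ) + 2) ^ c - 2 * (((a + n : ℕ) : ℝ) + 1) ^ c
        + ((a + n : ℕ) : ℝ) ^ c) := by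
    simp only [fwdDiff]
    push_cast
    ring_nf
  obtain ⟨hlo, hhi⟩ := rpow_secondDiff_mem_Icc hc1 hc2 hM hR (ha.trans hlow) hb
  rw [hval, hpow]
  constructor
  · linarith [mul_le_mul_of_nonneg_left hlo hθ]
  · linarith [mul_le_mul_of_nonneg_left hhi hθ]

lemma norm_sum_twist_Ico_le_of_pos {c R θ β M : ℝ} {a b : ℕ} (hc1 : 1 < c) (hc2 : c ≤ 2)
    (hR : 0 ≤ R) (hθ : 0 < θ) (hM : 1 ≤ M) (ha : M ≤ a) (hb : (b : ℝ) ≤ R * M) :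
    ‖∑ n ∈ Ico a b, twist c θ β n‖
      ≤ 7 * (c * (c - 1) * R + 2) / √(c * (c - 1) * (R + 2) ^ (c - 2)) *
        (√(θ * M ^ c) + M / √(θ * M ^ c)) := by
  have hM0 : 0 < M := by linarith
  have hdiff : ∀ n < b - a, _ := fun n hn =>
    have hhigh : ((a + n : ℕ) : ℝ) ≤ b := mod_cast (by omega : a + n ≤ b)
    fwdDiff_fwdDiff_phase_mem_Icc (β := β) hc1.le hc2 (by linarith : 0 ≤ R + 2) hθ.le hM0 ha
      (by linarith : ((a + n : ℕ) : ℝ) + 2 ≤ (R + 2) * M)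
  have hc : 0 < c * (c - 1) := mul_pos (by linarith) (by linarith)
  generalize c * (c - 1) = q at hdiff hc ⊢
  have hp0 : 0 < q * (R + 2) ^ (c - 2) := by positivity
  generalize q * (R + 2) ^ (c - 2) = p at hdiff hp0 ⊢
  have hF0 : 0 < θ * M ^ c := by positivity
  generalize θ * M ^ c = F at hdiff hF0 ⊢
  have hlength : ((b - a : ℕ) : ℝ) ≤ R * M := le_trans (mod_cast Nat.sub_le b a) hb
  have hsqrt : √(p * (F / M ^ 2)) = √p * (√F / M) := by
    rw [sqrt_mul hp0.le, sqrt_div hF0.le, sqrt_sq hM0.le]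
  rw [sum_Ico_eq_sum_range]
  calc _ ≤ 7 * (q * (F / M ^ 2) * ((b - a : ℕ) : ℝ) + 2) / √(p * (F / M ^ 2)) :=
        norm_sum_range_e_le_of_fwdDiff_fwdDiff (by positivity)
          (fun n hn => (hdiff n hn).1) fun n hn => (hdiff n hn).2
    _ ≤ 7 * (q * (F / M ^ 2) * (R * M) + 2) / (√p * (√F / M)) := by rw [hsqrt]; gcongr
    _ = 7 / √p * (q * R * √F + 2 * (M / √F)) := by
        field_simp
        rw [sq_sqrt hF0.le]
        ring
    _ ≤ 7 / √p * ((q * R + 2) * √F + (q * R + 2) * (M / √F)) := by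
        have hqR : 0 ≤ q * R := by positivity
        gcongr <;> linarith
    _ = _ := by ring

lemma exists_norm_sum_twist_Ico_le {c R : ℝ} (hc1 : 1 < c) (hc2 : c ≤ 2) (hR : 0 ≤ R) :
    ∃ C : ℝ, 0 < C ∧ ∀ (θ β M : ℝ) (a b : ℕ), θ ≠ 0 → 1 ≤ M → M ≤ a → (b : ℝ) ≤ R * M →
      ‖∑ n ∈ Ico a b, twist c θ β n‖ ≤ C * (√(|θ| * M ^ c) + M / √(|θ| * M ^ c)) := by
  have : 0 < c * (c - 1) := mul_pos (by linarith) (by linarith)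
  refine ⟨7 * (c * (c - 1) * R + 2) / √(c * (c - 1) * (R + 2) ^ (c - 2)), by positivity,
    fun θ β M a b hθ hM ha hb => ?_⟩
  rcases lt_or_gt_of_ne hθ with hneg | hpos
  · rw [abs_of_neg hneg, ← RCLike.norm_conj, map_sum, sum_congr rfl fun n _ => conj_twist c θ β n]
    exact norm_sum_twist_Ico_le_of_pos hc1 hc2 hR (neg_pos.2 hneg) hM ha hb
  · rw [abs_of_pos hpos]
    exact norm_sum_twist_Ico_le_of_pos hc1 hc2 hR hpos hM ha hb

/-! ### Shifts and correlations -/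

lemma sum_range_natAbs_sub_le {g : ℕ → ℝ} (hg : ∀ n, 0 ≤ g n) {H a : ℕ} (ha : a < H) :
    ∑ b ∈ range H, g ((a : ℤ) - b).natAbs ≤ g 0 + 2 * ∑ i ∈ range H, g (i + 1) := by
  have hbelow : ∑ b ∈ range a, g ((a : ℤ) - b).natAbs ≤ ∑ i ∈ range H, g (i + 1) := by
    rw [← sum_range_reflect]
    calc _ = ∑ j ∈ range a, g (j + 1) :=
          sum_congr rfl fun j hj => by rw [mem_range] at hj; congr 1; omega
      _ ≤ _ := sum_le_sum_of_subset_of_nonneg (range_mono ha.le) fun _ _ _ => hg _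
  have habove : ∑ b ∈ Ico (a + 1) H, g ((a : ℤ) - b).natAbs ≤ ∑ i ∈ range H, g (i + 1) := by
    rw [sum_Ico_eq_sum_range]
    calc _ = ∑ j ∈ range (H - (a + 1)), g (j + 1) :=
          sum_congr rfl fun j _ => by congr 1; omega
      _ ≤ _ := sum_le_sum_of_subset_of_nonneg (range_mono (Nat.sub_le _ _)) fun _ _ _ => hg _
  rw [← sum_range_add_sum_Ico _ (show a + 1 ≤ H by omega), sum_range_succ, sub_self,
    Int.natAbs_zero]
  linarith

lemma sum_range_inv_sqrt_le (n : ℕ) : ∑ i ∈ range n, 1 / √((i + 1 : ℕ) : ℝ) ≤ 2 * √n := by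
  induction n with
  | zero => simp
  | succ n ih =>
    have hn : √(n : ℝ) ^ 2 = n := sq_sqrt n.cast_nonneg
    have hn1 : √((n + 1 : ℕ) : ℝ) ^ 2 = n + 1 := by
      rw [sq_sqrt (Nat.cast_nonneg _), Nat.cast_add_one]
    have hstep : 1 / √((n + 1 : ℕ) : ℝ) ≤ 2 * √((n + 1 : ℕ) : ℝ) - 2 * √n := by
      rw [div_le_iff₀ (sqrt_pos.2 (by positivity))]
      nlinarith [sq_nonneg (√((n + 1 : ℕ) : ℝ) - √n)]
    rw [sum_range_succ]
    linarith

lemma norm_sq_sum_mul_le {ι : Type*} (s : Finset ι) {a : ι → ℂ} {A : ℝ}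
    (ha : ∀ m ∈ s, ‖a m‖ ≤ A) (S : ι → ℂ) :
    ‖∑ m ∈ s, a m * S m‖ ^ 2 ≤ A ^ 2 * #s * ∑ m ∈ s, ‖S m‖ ^ 2 :=
  calc ‖∑ m ∈ s, a m * S m‖ ^ 2 ≤ (∑ m ∈ s, A * ‖S m‖) ^ 2 := by
        gcongr
        refine norm_sum_le_of_le s fun m hm => ?_
        rw [norm_mul]
        exact mul_le_mul_of_nonneg_right (ha m hm) (norm_nonneg _)
    _ = A ^ 2 * (∑ m ∈ s, ‖S m‖) ^ 2 := by rw [← mul_sum, mul_pow]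
    _ ≤ A ^ 2 * (#s * ∑ m ∈ s, ‖S m‖ ^ 2) := by gcongr; exact sq_sum_le_card_mul_sum_sq
    _ = _ := by ring

lemma sum_norm_sq_sum_le {ι κ : Type*} (s : Finset ι) (t : Finset κ) (w : ι → κ → ℂ) :
    ∑ m ∈ s, ‖∑ q ∈ t, w m q‖ ^ 2
      ≤ ∑ q ∈ t, ∑ q' ∈ t, ‖∑ m ∈ s, w m q * conj (w m q')‖ := by
  have hexpand : ((∑ m ∈ s, ‖∑ q ∈ t, w m q‖ ^ 2 : ℝ) : ℂ)
      = ∑ q ∈ t, ∑ q' ∈ t, ∑ m ∈ s, w m q * conj (w m q') := by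
    push_cast
    simp_rw [← Complex.mul_conj', map_sum, sum_mul_sum]
    rw [sum_comm]
    exact sum_congr rfl fun q _ => sum_comm
  rw [← norm_of_nonneg (by positivity : 0 ≤ ∑ m ∈ s, ‖∑ q ∈ t, w m q‖ ^ 2), ← Complex.norm_real,
    hexpand]
  exact norm_sum_le_of_le t fun q _ => norm_sum_le _ _

lemma sq_mul_norm_sq_sum_Ico_le {z : ℕ → ℂ} {N Q : ℕ} (hQ : Q ≤ N)
    (hz : ∀ l, l ∉ Ico N (2 * N) → z l = 0) :
    (Q : ℝ) ^ 2 * ‖∑ l ∈ Ico N (2 * N), z l‖ ^ 2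
      ≤ 2 * N * ∑ t ∈ range (2 * N), ‖∑ q ∈ range Q, z (t + q)‖ ^ 2 := by
  have hshift : ∀ q ∈ range Q,
      ∑ t ∈ range (2 * N), z (t + q) = ∑ l ∈ Ico N (2 * N), z l := fun q hq => by
    rw [mem_range] at hq
    calc ∑ t ∈ range (2 * N), z (t + q) = ∑ l ∈ Ico q (2 * N + q), z l := by
          simp [sum_Ico_eq_sum_range, add_comm]
      _ = _ := (sum_subset (Ico_subset_Ico (by omega) (by omega)) fun l _ hl => hz l hl).symm
  have hsum : (Q : ℂ) * ∑ l ∈ Ico N (2 * N), z l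
      = ∑ t ∈ range (2 * N), ∑ q ∈ range Q, z (t + q) := by
    rw [sum_comm, sum_congr rfl hshift, sum_const, card_range, nsmul_eq_mul]
  calc _ = ‖∑ t ∈ range (2 * N), ∑ q ∈ range Q, z (t + q)‖ ^ 2 := by
        rw [← hsum, norm_mul, mul_pow, Complex.norm_natCast]
    _ ≤ _ := by
        simpa using norm_sq_sum_mul_le (range (2 * N)) (a := 1) (A := 1) (by simp)
          fun t => ∑ q ∈ range Q, z (t + q)

/-- Van der Corput's inequality, averaged over the outer variable `m`: the correlations in `l`
are only needed at distance less than the number `Q` of shifts. -/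
lemma sq_mul_sum_norm_sq_sum_Ico_le {ι : Type*} {s : Finset ι} {z : ι → ℕ → ℂ} {N Q : ℕ}
    {K : ℕ → ℝ} (hQ : Q ≤ N) (hK0 : ∀ n, 0 ≤ K n)
    (hK : ∀ l ∈ Ico N (2 * N), ∀ l' ∈ Ico N (2 * N),
      ‖∑ m ∈ s, z m l * conj (z m l')‖ ≤ K ((l : ℤ) - l').natAbs) :
    (Q : ℝ) ^ 2 * ∑ m ∈ s, ‖∑ l ∈ Ico N (2 * N), z m l‖ ^ 2
      ≤ 2 * N * (2 * N * (Q * (K 0 + 2 * ∑ i ∈ range Q, K (i + 1)))) := by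
  set w : ι → ℕ → ℂ := fun m => (Ico N (2 * N) : Set ℕ).indicator (z m) with hw
  have hw0 : ∀ m, ∀ l ∉ Ico N (2 * N), w m l = 0 := fun m l hl =>
    Set.indicator_of_notMem (mt mem_coe.1 hl) _
  have hwK : ∀ l l', ‖∑ m ∈ s, w m l * conj (w m l')‖ ≤ K ((l : ℤ) - l').natAbs := fun l l' => by
    by_cases hl : l ∈ Ico N (2 * N)
    · by_cases hl' : l' ∈ Ico N (2 * N)
      · simpa only [hw, Set.indicator_of_mem (mem_coe.2 hl), Set.indicator_of_mem (mem_coe.2 hl')]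
          using hK l hl l' hl'
      · simpa [hw0 _ l' hl'] using hK0 _
    · simpa [hw0 _ l hl] using hK0 _
  have hwz : ∀ m, ∑ l ∈ Ico N (2 * N), z m l = ∑ l ∈ Ico N (2 * N), w m l := fun m =>
    sum_congr rfl fun l hl => (Set.indicator_of_mem (mem_coe.2 hl) _).symm
  calc _ = ∑ m ∈ s, (Q : ℝ) ^ 2 * ‖∑ l ∈ Ico N (2 * N), w m l‖ ^ 2 := by simp only [mul_sum, hwz]
    _ ≤ ∑ m ∈ s, 2 * N * ∑ t ∈ range (2 * N), ‖∑ q ∈ range Q, w m (t + q)‖ ^ 2 :=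
        sum_le_sum fun m _ => sq_mul_norm_sq_sum_Ico_le hQ (hw0 m)
    _ = 2 * N * ∑ t ∈ range (2 * N), ∑ m ∈ s, ‖∑ q ∈ range Q, w m (t + q)‖ ^ 2 := by
        rw [← mul_sum, sum_comm]
    _ ≤ 2 * N * ∑ t ∈ range (2 * N), ∑ q ∈ range Q, (K 0 + 2 * ∑ i ∈ range Q, K (i + 1)) := by
        gcongr with t
        refine (sum_norm_sq_sum_le s (range Q) fun m q => w m (t + q)).trans ?_
        gcongr with q hq
        refine le_trans (sum_le_sum fun q' _ => ?_) (sum_range_natAbs_sub_le hK0 (mem_range.1 hq))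
        simpa using hwK (t + q) (t + q')
    _ = _ := by
        simp only [sum_const, card_range, nsmul_eq_mul]
        push_cast
        ring

lemma abs_rpow_sub_rpow_mem_Icc {c x y N : ℝ} (hc1 : 1 ≤ c) (hc2 : c ≤ 2) (hN : 0 < N)
    (hx : x ∈ Set.Icc N (2 * N)) (hy : y ∈ Set.Icc N (2 * N)) :
    |x ^ c - y ^ c| ∈ Set.Icc (N ^ (c - 1) * |x - y|) (4 * (N ^ (c - 1) * |x - y|)) := by
  wlog hxy : x < y generalizing x y
  · rcases (not_lt.1 hxy).eq_or_lt with rfl | hyx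
    · simp
    · rw [abs_sub_comm (x ^ c), abs_sub_comm x y]
      exact this hy hx hyx
  have hne : ∀ s, x ≤ s → s ≠ 0 := fun s hs => (hN.trans_le (hx.1.trans hs)).ne'
  obtain ⟨t, ht, hteq⟩ := exists_hasDerivAt_eq_slope (fun t : ℝ => t ^ c)
    (fun t => c * t ^ (c - 1)) hxy
    (fun s hs => (hasDerivAt_rpow_const (.inl (hne s hs.1))).continuousAt.continuousWithinAt)
    fun s hs => hasDerivAt_rpow_const (.inl (hne s hs.1.le))
  have ht0 : 0 < t := hN.trans_le (hx.1.trans ht.1.le)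
  have hd : 0 < y - x := sub_pos.2 hxy
  have hlow : N ^ (c - 1) ≤ t ^ (c - 1) :=
    rpow_le_rpow hN.le (hx.1.trans ht.1.le) (by linarith)
  have hhigh : t ^ (c - 1) ≤ 2 * N ^ (c - 1) :=
    calc t ^ (c - 1) ≤ (2 * N) ^ (c - 1) :=
          rpow_le_rpow ht0.le (ht.2.le.trans hy.2) (by linarith)
      _ = 2 ^ (c - 1) * N ^ (c - 1) := mul_rpow zero_le_two hN.le
      _ ≤ 2 ^ (1 : ℝ) * N ^ (c - 1) := by gcongr <;> linarith
      _ = _ := by rw [rpow_one]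
  have hN0 : 0 < N ^ (c - 1) := by positivity
  rw [eq_div_iff hd.ne'] at hteq
  rw [abs_sub_comm (x ^ c), abs_sub_comm x y, abs_of_pos hd, ← hteq,
    abs_of_nonneg (by positivity), ← mul_assoc 4]
  exact ⟨mul_le_mul_of_nonneg_right (by nlinarith) hd.le,
    mul_le_mul_of_nonneg_right (by nlinarith) hd.le⟩

lemma sqrt_add_div_sqrt_le {F G M : ℝ} (hG : 0 < G) (hGF : G ≤ F) (hFG : F ≤ 4 * G)
    (hM : 0 ≤ M) : √F + M / √F ≤ 2 * (√G + M / √G) := by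
  have hF : √F ≤ 2 * √G :=
    sqrt_le_iff.2 ⟨by positivity, by rw [mul_pow, sq_sqrt hG.le]; linarith⟩
  have hdiv : M / √F ≤ M / √G :=
    div_le_div_of_nonneg_left hM (sqrt_pos.2 hG) (sqrt_le_sqrt hGF)
  have hpos : 0 ≤ M / √G := by positivity
  linarith

/-- The oscillating factor cut off to `n₁ < n ≤ n₂`. -/
noncomputable def cutTwist (c θ β : ℝ) (n₁ n₂ : ℕ) : ℕ → ℂ :=
  (Set.Ioc n₁ n₂).indicator (twist c θ β)

lemma norm_cutTwist_le_one (c θ β : ℝ) (n₁ n₂ n : ℕ) : ‖cutTwist c θ β n₁ n₂ n‖ ≤ 1 :=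
  (norm_indicator_le_norm_self _ _).trans (norm_twist c θ β n).le

lemma cutTwist_eq_zero {c θ β : ℝ} {n₁ n₂ n : ℕ} (hn : ¬(n₁ < n ∧ n ≤ n₂)) :
    cutTwist c θ β n₁ n₂ n = 0 :=
  Set.indicator_of_notMem (s := Set.Ioc n₁ n₂) hn _

lemma cutTwist_eq_twist {c θ β : ℝ} {n₁ n₂ n : ℕ} (hn : n₁ < n ∧ n ≤ n₂) :
    cutTwist c θ β n₁ n₂ n = twist c θ β n :=
  Set.indicator_of_mem (s := Set.Ioc n₁ n₂) hn _

lemma sum_cutTwist_mul_conj_cutTwist (c θ β : ℝ) (n₁ n₂ l l' : ℕ) (s : Finset ℕ) :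
    ∑ m ∈ s, cutTwist c θ β n₁ n₂ (m * l) * conj (cutTwist c θ β n₁ n₂ (m * l'))
      = ∑ m ∈ s with (n₁ < m * l ∧ m * l ≤ n₂) ∧ (n₁ < m * l' ∧ m * l' ≤ n₂),
        twist c (θ * ((l : ℝ) ^ c - (l' : ℝ) ^ c)) (β * ((l : ℝ) - l')) m := by
  rw [sum_filter]
  refine sum_congr rfl fun m _ => ?_
  split_ifs with h
  · rw [cutTwist_eq_twist h.1, cutTwist_eq_twist h.2, twist_mul, twist_mul, conj_twist,
      twist_mul_twist]
    ring_nf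
  · rcases not_and_or.1 h with h | h <;> simp [cutTwist_eq_zero h]

lemma exists_norm_sum_twist_le_of_ordConnected {c : ℝ} (hc1 : 1 < c) (hc2 : c ≤ 2) :
    ∃ C : ℝ, 0 < C ∧ ∀ (θ β : ℝ) (M : ℕ) (s : Finset ℕ), θ ≠ 0 → 1 ≤ M →
      (s : Set ℕ).OrdConnected → s ⊆ Ico M (2 * M) →
      ‖∑ m ∈ s, twist c θ β m‖ ≤ C * (√(|θ| * (M : ℝ) ^ c) + M / √(|θ| * (M : ℝ) ^ c)) := by
  obtain ⟨C, hC, htwist⟩ := exists_norm_sum_twist_Ico_le hc1 hc2 zero_le_two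
  refine ⟨C, hC, fun θ β M s hθ hM hs hsM => ?_⟩
  obtain ⟨x, y, rfl⟩ := exists_eq_Ico_of_ordConnected s hs
  rcases le_or_gt y x with hyx | hxy
  · rw [Ico_eq_empty_of_le hyx, sum_empty, norm_zero]
    positivity
  · obtain ⟨hMx, hyM⟩ := (Ico_subset_Ico_iff hxy).1 hsM
    exact htwist θ β M x y hθ (mod_cast hM) (mod_cast hMx) (mod_cast hyM)

lemma exists_norm_correlation_le {c : ℝ} (hc1 : 1 < c) (hc2 : c ≤ 2) :
    ∃ C : ℝ, 0 < C ∧ ∀ (θ β : ℝ) (M N l l' n₁ n₂ : ℕ), θ ≠ 0 → 1 ≤ M → 1 ≤ N →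
      l ∈ Ico N (2 * N) → l' ∈ Ico N (2 * N) → l ≠ l' →
      ‖∑ m ∈ Ico M (2 * M), cutTwist c θ β n₁ n₂ (m * l) * conj (cutTwist c θ β n₁ n₂ (m * l'))‖
      ≤ C * (√(|θ| * ((M : ℝ) * N) ^ c / N * ((l : ℤ) - l').natAbs)
          + M / √(|θ| * ((M : ℝ) * N) ^ c / N * ((l : ℤ) - l').natAbs)) := by
  obtain ⟨C, hC, htwist⟩ := exists_norm_sum_twist_le_of_ordConnected hc1 hc2
  refine ⟨C * 2, by positivity, fun θ β M N l l' n₁ n₂ hθ hM hN hl hl' hne => ?_⟩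
  have hM0 : (0 : ℝ) < M := mod_cast hM
  have hN0 : (0 : ℝ) < N := mod_cast hN
  have hmem : ∀ {l}, l ∈ Ico N (2 * N) → (l : ℝ) ∈ Set.Icc (N : ℝ) (2 * N) := fun h =>
    ⟨mod_cast (mem_Ico.1 h).1, mod_cast (mem_Ico.1 h).2.le⟩
  have hdist : ((((l : ℤ) - l').natAbs : ℕ) : ℝ) = |(l : ℝ) - l'| := by
    rw [Nat.cast_natAbs]; push_cast; rfl
  have hdist0 : 0 < |(l : ℝ) - l'| := abs_pos.2 (sub_ne_zero.2 (mod_cast hne))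
  obtain ⟨hlow, hhigh⟩ := abs_rpow_sub_rpow_mem_Icc hc1.le hc2 hN0 (hmem hl) (hmem hl')
  have hV : |θ| * ((M : ℝ) * N) ^ c / N * |(l : ℝ) - l'|
      = |θ| * (M : ℝ) ^ c * ((N : ℝ) ^ (c - 1) * |(l : ℝ) - l'|) := by
    rw [mul_rpow hM0.le hN0.le, rpow_sub hN0, rpow_one]
    ring
  have hθM : 0 < |θ| * (M : ℝ) ^ c := mul_pos (abs_pos.2 hθ) (by positivity)
  have hA : θ * ((l : ℝ) ^ c - (l' : ℝ) ^ c) ≠ 0 :=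
    mul_ne_zero hθ (abs_pos.1 (hlow.trans_lt' (by positivity)))
  have hord : ((↑{m ∈ Ico M (2 * M) | (n₁ < m * l ∧ m * l ≤ n₂) ∧ (n₁ < m * l' ∧ m * l' ≤ n₂)} :
      Set ℕ)).OrdConnected := ⟨fun i hi k hk j ⟨hij, hjk⟩ => by
    simp only [coe_filter, mem_Ico, Set.mem_ofPred_eq] at hi hk ⊢
    have := Nat.mul_le_mul_right l hij
    have := Nat.mul_le_mul_right l hjk
    have := Nat.mul_le_mul_right l' hij
    have := Nat.mul_le_mul_right l' hjk
    omega⟩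
  rw [sum_cutTwist_mul_conj_cutTwist, hdist, hV, mul_assoc C 2]
  refine (htwist _ _ M _ hA hM hord (filter_subset _ _)).trans ?_
  gcongr
  refine sqrt_add_div_sqrt_le (by positivity) ?_ ?_ hM0.le
  · rw [abs_mul]
    linarith [mul_le_mul_of_nonneg_left hlow hθM.le]
  · rw [abs_mul]
    linarith [mul_le_mul_of_nonneg_left hhigh hθM.le]

/-! ### Bilinear sums -/

/-- The bilinear form `∑ a(m) b(l) φ(m l)` over a box; every sum over Dirichlet convolutions is
brought to this shape. -/
noncomputable def bilinearSum (φ a b : ℕ → ℂ) (s t : Finset ℕ) : ℂ :=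
  ∑ m ∈ s, ∑ l ∈ t, a m * b l * φ (m * l)

lemma bilinearSum_comm (φ a b : ℕ → ℂ) (s t : Finset ℕ) :
    bilinearSum φ a b s t = bilinearSum φ b a t s := by
  rw [bilinearSum, bilinearSum, sum_comm]
  exact sum_congr rfl fun l _ => sum_congr rfl fun m _ => by
    rw [mul_comm m l, mul_comm (a m) (b l)]

/-- An upper bound, at distance `k = |l - l'|`, for the correlation over `m` of the phases attached
to `l` and `l'`. -/
noncomputable def correlationKernel (C V M : ℝ) (k : ℕ) : ℝ :=
  if k = 0 then M else C * (√(V * k) + M / √(V * k))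

lemma correlationKernel_nonneg {C M : ℝ} (hC : 0 ≤ C) (V : ℝ) (hM : 0 ≤ M) (k : ℕ) :
    0 ≤ correlationKernel C V M k := by
  unfold correlationKernel
  split_ifs <;> positivity

lemma correlationKernel_zero_add_two_mul_sum_le {C V M : ℝ} (hC : 0 ≤ C) (hV : 0 ≤ V) (hM : 0 ≤ M)
    (Q : ℕ) : correlationKernel C V M 0 + 2 * ∑ i ∈ range Q, correlationKernel C V M (i + 1)
      ≤ M + 2 * C * (Q * √(V * Q) + 2 * (M / √V * √Q)) := by
  have hterm : ∀ i ∈ range Q, correlationKernel C V M (i + 1)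
      ≤ C * (√(V * Q) + M / √V * (1 / √((i + 1 : ℕ) : ℝ))) := fun i hi => by
    have hiQ : ((i + 1 : ℕ) : ℝ) ≤ Q := mod_cast mem_range.1 hi
    rw [correlationKernel, if_neg i.succ_ne_zero, div_mul_div_comm, mul_one, ← sqrt_mul hV]
    gcongr
  have hsum : ∑ i ∈ range Q, correlationKernel C V M (i + 1)
      ≤ C * (Q * √(V * Q) + M / √V * (2 * √Q)) := by
    refine (sum_le_sum hterm).trans ?_
    rw [← mul_sum, sum_add_distrib, ← mul_sum, sum_const, card_range, nsmul_eq_mul]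
    gcongr
    exact sum_range_inv_sqrt_le Q
  rw [correlationKernel, if_pos rfl]
  linarith

lemma exists_norm_weighted_correlation_le {c : ℝ} (hc1 : 1 < c) (hc2 : c ≤ 2) :
    ∃ C : ℝ, 0 < C ∧ ∀ (θ β B : ℝ) (b : ℕ → ℂ) (M N n₁ n₂ : ℕ), θ ≠ 0 → 1 ≤ M → 1 ≤ N →
      (∀ l ∈ Ico N (2 * N), ‖b l‖ ≤ B) → ∀ l ∈ Ico N (2 * N), ∀ l' ∈ Ico N (2 * N),
      ‖∑ m ∈ Ico M (2 * M), b l * cutTwist c θ β n₁ n₂ (m * l)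
          * conj (b l' * cutTwist c θ β n₁ n₂ (m * l'))‖
        ≤ B ^ 2 * correlationKernel C (|θ| * ((M : ℝ) * N) ^ c / N) M ((l : ℤ) - l').natAbs := by
  obtain ⟨C, hC, hcorr⟩ := exists_norm_correlation_le hc1 hc2
  refine ⟨C, hC, fun θ β B b M N n₁ n₂ hθ hM hN hb l hl l' hl' => ?_⟩
  have hfactor : ∑ m ∈ Ico M (2 * M), b l * cutTwist c θ β n₁ n₂ (m * l)
        * conj (b l' * cutTwist c θ β n₁ n₂ (m * l'))
      = b l * conj (b l') * ∑ m ∈ Ico M (2 * M),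
        cutTwist c θ β n₁ n₂ (m * l) * conj (cutTwist c θ β n₁ n₂ (m * l')) := by
    rw [mul_sum]
    exact sum_congr rfl fun m _ => by rw [map_mul]; ring
  have hcoeff : ‖b l‖ * ‖b l'‖ ≤ B ^ 2 := by
    rw [sq]
    exact mul_le_mul (hb l hl) (hb l' hl') (norm_nonneg _) ((norm_nonneg _).trans (hb l hl))
  rw [hfactor, norm_mul, norm_mul, RCLike.norm_conj]
  refine mul_le_mul hcoeff ?_ (norm_nonneg _) (sq_nonneg B)
  rcases eq_or_ne l l' with rfl | hne
  · rw [correlationKernel, sub_self, Int.natAbs_zero, if_pos rfl]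
    calc _ ≤ ∑ _ ∈ Ico M (2 * M), (1 : ℝ) := norm_sum_le_of_le _ fun _ _ => by
          rw [norm_mul, RCLike.norm_conj]
          exact mul_le_one₀ (norm_cutTwist_le_one ..) (norm_nonneg _) (norm_cutTwist_le_one ..)
      _ = M := by simp [two_mul]
  · rw [correlationKernel, if_neg (by omega)]
    exact hcorr θ β M N l l' n₁ n₂ hθ hM hN hl hl' hne

lemma exists_sum_norm_sq_sum_cutTwist_le {c : ℝ} (hc1 : 1 < c) (hc2 : c ≤ 2) :
    ∃ C : ℝ, 0 < C ∧ ∀ (θ β B : ℝ) (b : ℕ → ℂ) (M N Q n₁ n₂ : ℕ), θ ≠ 0 → 1 ≤ M →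
      1 ≤ Q → Q ≤ N → (∀ l ∈ Ico N (2 * N), ‖b l‖ ≤ B) →
      ∑ m ∈ Ico M (2 * M), ‖∑ l ∈ Ico N (2 * N), b l * cutTwist c θ β n₁ n₂ (m * l)‖ ^ 2
      ≤ 4 * N ^ 2 * B ^ 2 * (M / Q + 2 * C * (√(|θ| * ((M : ℝ) * N) ^ c / N * Q)
          + 2 * (M / √(|θ| * ((M : ℝ) * N) ^ c / N * Q)))) := by
  obtain ⟨C, hC, hcorr⟩ := exists_norm_weighted_correlation_le hc1 hc2
  refine ⟨C, hC, fun θ β B b M N Q n₁ n₂ hθ hM hQ hQN hb => ?_⟩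
  have hM0 : (0 : ℝ) < M := mod_cast hM
  have hN0 : (0 : ℝ) < N := mod_cast hQ.trans hQN
  have : (0 : ℝ) < Q := mod_cast hQ
  set V : ℝ := |θ| * ((M : ℝ) * N) ^ c / N
  have hV : 0 < V := div_pos (mul_pos (abs_pos.2 hθ) (by positivity)) hN0
  have hshift := sq_mul_sum_norm_sq_sum_Ico_le hQN
    (fun k => mul_nonneg (sq_nonneg B) (correlationKernel_nonneg hC.le V hM0.le k))
    (hcorr θ β B b M N n₁ n₂ hθ hM (hQ.trans hQN) hb)
  have hkernel := correlationKernel_zero_add_two_mul_sum_le hC.le hV.le hM0.le Q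
  rw [← mul_sum, mul_left_comm 2, ← mul_add] at hshift
  refine le_of_mul_le_mul_left (hshift.trans ?_) (by positivity : (0 : ℝ) < Q ^ 2)
  generalize correlationKernel C V M 0 + 2 * ∑ i ∈ range Q, correlationKernel C V M (i + 1) = K
    at hkernel
  calc _ ≤ 2 * N * (2 * N * (Q * (B ^ 2 * (M + 2 * C * (Q * √(V * Q) + 2 * (M / √V * √Q)))))) := by
        gcongr
    _ = _ := by
        rw [sqrt_mul hV.le]
        nth_rewrite 2 [← div_sqrt (x := (Q : ℝ))]
        field_simp
        ring

lemma exists_norm_sq_bilinearSum_le {c : ℝ} (hc1 : 1 < c) (hc2 : c ≤ 2) :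
    ∃ C : ℝ, 0 < C ∧ ∀ (θ β A B : ℝ) (a b : ℕ → ℂ) (M N Q n₁ n₂ : ℕ), θ ≠ 0 → 1 ≤ M →
      1 ≤ Q → Q ≤ N → (∀ m ∈ Ico M (2 * M), ‖a m‖ ≤ A) → (∀ l ∈ Ico N (2 * N), ‖b l‖ ≤ B) →
      ‖bilinearSum (cutTwist c θ β n₁ n₂) a b (Ico M (2 * M)) (Ico N (2 * N))‖ ^ 2
      ≤ C * (A * B) ^ 2 * (((M : ℝ) * N) ^ 2 / Q
          + M * N ^ 2 * √(|θ| * ((M : ℝ) * N) ^ c / N * Q)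
          + ((M : ℝ) * N) ^ 2 / √(|θ| * ((M : ℝ) * N) ^ c / N * Q)) := by
  obtain ⟨C, hC, hsq⟩ := exists_sum_norm_sq_sum_cutTwist_le hc1 hc2
  refine ⟨4 * (1 + 4 * C), by positivity, fun θ β A B a b M N Q n₁ n₂ hθ hM hQ hQN ha hb => ?_⟩
  have hcauchy := norm_sq_sum_mul_le (Ico M (2 * M)) ha fun m =>
    ∑ l ∈ Ico N (2 * N), b l * cutTwist c θ β n₁ n₂ (m * l)
  simp only [mul_sum, ← mul_assoc] at hcauchy
  rw [← mul_sum, Nat.card_Ico, show 2 * M - M = M by omega] at hcauchy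
  refine hcauchy.trans
    ((mul_le_mul_of_nonneg_left (hsq θ β B b M N Q n₁ n₂ hθ hM hQ hQN hb) (by positivity)).trans ?_)
  generalize |θ| * ((M : ℝ) * N) ^ c / N = V
  have hdiagonal : 0 ≤ ((M : ℝ) * N) ^ 2 / Q := by positivity
  have hmain : 0 ≤ (M : ℝ) * N ^ 2 * √(V * Q) := by positivity
  have hdual : 0 ≤ ((M : ℝ) * N) ^ 2 / √(V * Q) := by positivity
  calc _ = 4 * (A * B) ^ 2 * (((M : ℝ) * N) ^ 2 / Q + 2 * C * (M * N ^ 2 * √(V * Q))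
        + 4 * C * (((M : ℝ) * N) ^ 2 / √(V * Q))) := by ring
    _ ≤ 4 * (A * B) ^ 2 * ((1 + 4 * C) * (((M : ℝ) * N) ^ 2 / Q
        + M * N ^ 2 * √(V * Q) + ((M : ℝ) * N) ^ 2 / √(V * Q))) := by
        refine mul_le_mul_of_nonneg_left ?_ (by positivity)
        linarith [mul_nonneg hC.le hdiagonal, mul_nonneg hC.le hmain]
    _ = _ := by ring

/-- The frequencies `θ` to which the type I and type II estimates apply: the phase `θ n ^ c` has
size between `X ^ (11 / 32)` and `X ^ (38 / 32)` for `n` of size `X`. -/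
def IsMediumFrequency (c X θ : ℝ) : Prop :=
  |θ| * X ^ c ∈ Set.Icc (X ^ (11 / 32 : ℝ)) (X ^ (38 / 32 : ℝ))

lemma IsMediumFrequency.ne_zero {c X θ : ℝ} (hX : 0 < X) (hθ : IsMediumFrequency c X θ) :
    θ ≠ 0 := by
  rintro rfl
  have h := hθ.1
  rw [abs_zero, zero_mul] at h
  exact h.not_gt (rpow_pos_of_pos hX _)

lemma two_le_rpow_one_div_sixteen {X : ℝ} (hX : 2 ^ 16 ≤ X) : 2 ≤ X ^ (1 / 16 : ℝ) := by
  rw [show (2 : ℝ) = (2 ^ 16 : ℝ) ^ (1 / 16 : ℝ) by rw [← rpow_natCast, ← rpow_mul] <;> norm_num]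
  gcongr

lemma half_le_floor {x : ℝ} (hx : 1 ≤ x) : x / 2 ≤ ⌊x⌋₊ := by
  have : (1 : ℝ) ≤ ⌊x⌋₊ := mod_cast Nat.le_floor (by exact_mod_cast hx)
  linarith [Nat.lt_floor_add_one x]

-- `Q` is as large as possible subject to `Q ≤ N` and to the second term of the bilinear bound
-- staying below `X ^ (31 / 16)`.
lemma exists_shift_length {X T : ℝ} {N : ℕ} (hX : 2 ^ 16 ≤ X)
    (hT : T ∈ Set.Icc (X ^ (11 / 32 : ℝ)) (X ^ (38 / 32 : ℝ))) (hXN : X ^ (1 / 16 : ℝ) ≤ 2 * N)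
    (hNX : (N : ℝ) ≤ X ^ (1 / 2 : ℝ)) :
    ∃ Q : ℕ, 1 ≤ Q ∧ Q ≤ N ∧ X ^ (1 / 16 : ℝ) / 4 ≤ Q ∧ T * Q ≤ X ^ (5 / 4 : ℝ) ∧
      X ^ (11 / 32 : ℝ) * N ≤ 2 * (T * Q) := by
  have hX0 : 0 < X := by linarith
  have hT0 : 0 < T := (rpow_pos_of_pos hX0 _).trans_le hT.1
  have hX16 := two_le_rpow_one_div_sixteen hX
  have hTX : X ^ (1 / 16 : ℝ) ≤ X ^ (5 / 4 : ℝ) / T := by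
    rw [le_div_iff₀ hT0]
    calc _ ≤ X ^ (1 / 16 : ℝ) * X ^ (38 / 32 : ℝ) := by gcongr; exact hT.2
      _ = X ^ (5 / 4 : ℝ) := by rw [← rpow_add hX0]; norm_num
  set x := min (N : ℝ) (X ^ (5 / 4 : ℝ) / T) with hx
  have hXx : X ^ (1 / 16 : ℝ) / 2 ≤ x := le_min (by linarith) (by linarith)
  have hx1 : 1 ≤ x := by linarith
  have hfloor : (⌊x⌋₊ : ℝ) ≤ x := Nat.floor_le (by linarith)
  have hfloor' := half_le_floor hx1
  refine ⟨⌊x⌋₊, Nat.le_floor (by exact_mod_cast hx1),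
    mod_cast hfloor.trans (min_le_left _ _), by linarith, ?_, ?_⟩
  · rw [mul_comm, ← le_div_iff₀ hT0]
    exact hfloor.trans (min_le_right _ _)
  · have hTx : X ^ (11 / 32 : ℝ) * N ≤ T * x := by
      rw [hx, mul_min_of_nonneg _ _ hT0.le, mul_div_cancel₀ _ hT0.ne']
      refine le_min (by gcongr; exact hT.1) ?_
      calc _ ≤ X ^ (11 / 32 : ℝ) * X ^ (1 / 2 : ℝ) := by gcongr
        _ = X ^ (27 / 32 : ℝ) := by rw [← rpow_add hX0]; norm_num
        _ ≤ _ := rpow_le_rpow_of_exponent_le (by linarith) (by norm_num)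
    linarith [mul_le_mul_of_nonneg_left hfloor' hT0.le]

lemma mul_sq_mul_sqrt_le {X M N W : ℝ} (hX : 1 ≤ X) (hN : 0 < N) (hMN : M * N ≤ X)
    (hNX : N ≤ X ^ (1 / 2 : ℝ)) (hW : W ≤ X ^ (5 / 4 : ℝ) / N) :
    M * N ^ 2 * √W ≤ X ^ (31 / 16 : ℝ) := by
  have hX0 : 0 < X := by linarith
  have hsqrt : N * √W ≤ X ^ (7 / 8 : ℝ) := by
    rw [← sqrt_sq hN.le, ← sqrt_mul (sq_nonneg N)]
    refine sqrt_le_iff.2 ⟨by positivity, ?_⟩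
    calc N ^ 2 * W ≤ N ^ 2 * (X ^ (5 / 4 : ℝ) / N) := by gcongr
      _ = N * X ^ (5 / 4 : ℝ) := by field_simp
      _ ≤ X ^ (1 / 2 : ℝ) * X ^ (5 / 4 : ℝ) := by gcongr
      _ = (X ^ (7 / 8 : ℝ)) ^ 2 := by
          rw [← rpow_add hX0, ← rpow_natCast, ← rpow_mul hX0.le]; norm_num
  calc M * N ^ 2 * √W = M * N * (N * √W) := by ring
    _ ≤ X * X ^ (7 / 8 : ℝ) := by gcongr
    _ = X ^ (15 / 8 : ℝ) := by rw [← rpow_one_add' hX0.le (by norm_num)]; norm_num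
    _ ≤ _ := rpow_le_rpow_of_exponent_le hX (by norm_num)

lemma sq_div_le_of_rpow_le {X P κ W : ℝ} (hX : 0 < X) (hP : 0 ≤ P) (hPX : P ≤ X) (hκ : 0 < κ)
    (hW : κ * X ^ (1 / 16 : ℝ) ≤ W) : P ^ 2 / W ≤ 1 / κ * X ^ (31 / 16 : ℝ) := by
  have hsplit : X ^ (31 / 16 : ℝ) * X ^ (1 / 16 : ℝ) = X ^ 2 := by
    rw [← rpow_add hX, ← rpow_natCast]; norm_num
  rw [div_le_iff₀ ((by positivity : 0 < κ * X ^ (1 / 16 : ℝ)).trans_le hW)]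
  calc P ^ 2 ≤ X ^ 2 := by gcongr
    _ = 1 / κ * X ^ (31 / 16 : ℝ) * (κ * X ^ (1 / 16 : ℝ)) := by rw [← hsplit]; field_simp
    _ ≤ _ := by gcongr

lemma bilinear_bound_le {X κ M N Q W : ℝ} (hX : 1 ≤ X) (hκ : 0 < κ) (hM : 0 ≤ M) (hN : 0 < N)
    (hMN : M * N ≤ X) (hNX : N ≤ X ^ (1 / 2 : ℝ)) (hQ : X ^ (1 / 16 : ℝ) / 4 ≤ Q)
    (hWN : W ≤ X ^ (5 / 4 : ℝ) / N) (hW : κ * X ^ (11 / 32 : ℝ) ≤ W) :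
    (M * N) ^ 2 / Q + M * N ^ 2 * √W + (M * N) ^ 2 / √W
      ≤ (5 + 1 / √κ) * X ^ (31 / 16 : ℝ) := by
  have hX0 : 0 < X := by linarith
  have hMN0 : 0 ≤ M * N := by positivity
  have hsqrt : √κ * X ^ (1 / 16 : ℝ) ≤ √W := by
    refine le_sqrt_of_sq_le (le_trans ?_ hW)
    rw [mul_pow, sq_sqrt hκ.le, ← rpow_natCast, ← rpow_mul hX0.le]
    exact mul_le_mul_of_nonneg_left (rpow_le_rpow_of_exponent_le hX (by norm_num)) hκ.le
  have hdiagonal := sq_div_le_of_rpow_le (κ := 1 / 4) (W := Q) hX0 hMN0 hMN (by norm_num)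
    (by linarith)
  have hmain := mul_sq_mul_sqrt_le hX hN hMN hNX hWN
  have hdual := sq_div_le_of_rpow_le hX0 hMN0 hMN (sqrt_pos.2 hκ) hsqrt
  linarith

lemma exists_norm_bilinearSum_le_of_le {c μ : ℝ} (hc1 : 1 < c) (hc2 : c ≤ 2) (hμ : 0 < μ) :
    ∃ C : ℝ, 0 < C ∧ ∀ (X θ β A B : ℝ) (a b : ℕ → ℂ) (M N n₁ n₂ : ℕ), 2 ^ 16 ≤ X →
      IsMediumFrequency c X θ → N ≤ M → X ^ (1 / 16 : ℝ) ≤ 2 * N →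
      (M : ℝ) * N ≤ X → μ * X ≤ 4 * (M * N) → 0 ≤ A → 0 ≤ B →
      (∀ m ∈ Ico M (2 * M), ‖a m‖ ≤ A) → (∀ l ∈ Ico N (2 * N), ‖b l‖ ≤ B) →
      ‖bilinearSum (cutTwist c θ β n₁ n₂) a b (Ico M (2 * M)) (Ico N (2 * N))‖
        ≤ C * (A * B) * X ^ (31 / 32 : ℝ) := by
  obtain ⟨C, hC, hsq⟩ := exists_norm_sq_bilinearSum_le hc1 hc2
  obtain ⟨κ, hκ⟩ : ∃ κ, κ = (μ / 4) ^ c / 2 := ⟨_, rfl⟩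
  have hκ0 : 0 < κ := by rw [hκ]; positivity
  refine ⟨√(C * (5 + 1 / √κ)), by positivity,
    fun X θ β A B a b M N n₁ n₂ hX hθ hNM hXN hMNX hXMN hA hB ha hb => ?_⟩
  have hX0 : 0 < X := by linarith
  have hNM' : (N : ℝ) ≤ M := mod_cast hNM
  have hN0 : (0 : ℝ) < N := by linarith [two_le_rpow_one_div_sixteen hX]
  have hNX : (N : ℝ) ≤ X ^ (1 / 2 : ℝ) := by
    rw [← sqrt_eq_rpow]
    exact le_sqrt_of_sq_le (by nlinarith)
  obtain ⟨Q, hQ1, hQN, hXQ, hTQ, hTQ'⟩ := exists_shift_length hX hθ hXN hNX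
  have hupper : |θ| * ((M : ℝ) * N) ^ c / N * Q ≤ X ^ (5 / 4 : ℝ) / N := by
    rw [div_mul_eq_mul_div]
    gcongr
    exact hTQ.trans' (by gcongr)
  have hlower : κ * X ^ (11 / 32 : ℝ) ≤ |θ| * ((M : ℝ) * N) ^ c / N * Q := by
    rw [div_mul_eq_mul_div, le_div_iff₀ hN0]
    calc κ * X ^ (11 / 32 : ℝ) * N ≤ κ * (2 * (|θ| * X ^ c * Q)) := by
          rw [mul_assoc]; gcongr
      _ = |θ| * (μ / 4 * X) ^ c * Q := by rw [mul_rpow (by positivity) hX0.le, hκ]; ring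
      _ ≤ _ := by
          have : μ / 4 * X ≤ M * N := by linarith
          gcongr
  refine (pow_le_pow_iff_left₀ (norm_nonneg _) (by positivity) two_ne_zero).1 ?_
  calc _ ≤ C * (A * B) ^ 2 * ((5 + 1 / √κ) * X ^ (31 / 16 : ℝ)) := by
        refine (hsq θ β A B a b M N Q n₁ n₂ (hθ.ne_zero hX0) (hQ1.trans (hQN.trans hNM)) hQ1 hQN
          ha hb).trans (mul_le_mul_of_nonneg_left ?_ (by positivity))
        exact bilinear_bound_le (by linarith) hκ0 M.cast_nonneg hN0 hMNX hNX hXQ hupper hlower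
    _ = _ := by
        rw [mul_pow _ (X ^ _), mul_pow _ (A * B), sq_sqrt (by positivity),
          ← rpow_mul_natCast hX0.le]
        norm_num
        ring

lemma bilinearSum_cutTwist_eq_zero {c θ β μ X : ℝ} (hμ : 0 ≤ μ) (hX : 0 ≤ X) (a b : ℕ → ℂ)
    {M N : ℕ} (h : X < (M : ℝ) * N ∨ 4 * ((M : ℝ) * N) < μ * X) :
    bilinearSum (cutTwist c θ β ⌊μ * X⌋₊ ⌊X⌋₊) a b (Ico M (2 * M)) (Ico N (2 * N)) = 0 := by
  refine sum_eq_zero fun m hm => sum_eq_zero fun l hl => ?_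
  obtain ⟨hMm, hmM⟩ := mem_Ico.1 hm
  obtain ⟨hNl, hlN⟩ := mem_Ico.1 hl
  rw [cutTwist_eq_zero, mul_zero]
  rw [Nat.floor_lt (by positivity), Nat.le_floor_iff hX]
  rintro ⟨hlow, hhigh⟩
  have hge : (M : ℝ) * N ≤ (m * l : ℕ) := mod_cast Nat.mul_le_mul hMm hNl
  have hle : ((m * l : ℕ) : ℝ) ≤ 2 * M * (2 * N) := mod_cast Nat.mul_le_mul hmM.le hlN.le
  rcases h with h | h <;> linarith

lemma exists_norm_bilinearSum_le {c μ : ℝ} (hc1 : 1 < c) (hc2 : c ≤ 2) (hμ : 0 < μ) :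
    ∃ C : ℝ, 0 < C ∧ ∀ (X θ β A B : ℝ) (a b : ℕ → ℂ) (M N : ℕ), 2 ^ 16 ≤ X →
      IsMediumFrequency c X θ → X ^ (1 / 16 : ℝ) ≤ 2 * M → X ^ (1 / 16 : ℝ) ≤ 2 * N →
      0 ≤ A → 0 ≤ B → (∀ m ∈ Ico M (2 * M), ‖a m‖ ≤ A) → (∀ l ∈ Ico N (2 * N), ‖b l‖ ≤ B) →
      ‖bilinearSum (cutTwist c θ β ⌊μ * X⌋₊ ⌊X⌋₊) a b (Ico M (2 * M)) (Ico N (2 * N))‖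
        ≤ C * (A * B) * X ^ (31 / 32 : ℝ) := by
  obtain ⟨C, hC, hbox⟩ := exists_norm_bilinearSum_le_of_le hc1 hc2 hμ
  refine ⟨C, hC, fun X θ β A B a b M N hX hθ hXM hXN hA hB ha hb => ?_⟩
  have hX0 : 0 ≤ X := by linarith
  by_cases hempty : X < (M : ℝ) * N ∨ 4 * ((M : ℝ) * N) < μ * X
  · rw [bilinearSum_cutTwist_eq_zero hμ.le hX0 a b hempty, norm_zero]
    positivity
  · obtain ⟨hMNX, hXMN⟩ : (M : ℝ) * N ≤ X ∧ μ * X ≤ 4 * (M * N) := by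
      simpa only [not_or, not_lt] using hempty
    rcases le_total N M with hNM | hMN
    · exact hbox X θ β A B a b M N _ _ hX hθ hNM hXN hMNX hXMN hA hB ha hb
    · rw [bilinearSum_comm, mul_comm A]
      rw [mul_comm (M : ℝ)] at hMNX hXMN
      exact hbox X θ β B A b a N M _ _ hX hθ hMN hXM hMNX hXMN hB hA hb ha

lemma sum_Ico_one_two_pow {G : Type*} [AddCommMonoid G] (f : ℕ → G) (J : ℕ) :
    ∑ m ∈ Ico 1 (2 ^ J), f m = ∑ j ∈ range J, ∑ m ∈ Ico (2 ^ j) (2 * 2 ^ j), f m := by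
  induction J with
  | zero => simp
  | succ J ih =>
    rw [sum_range_succ, ← ih, ← pow_succ',
      sum_Ico_consecutive _ Nat.one_le_two_pow (Nat.pow_le_pow_right two_pos J.le_succ)]

lemma bilinearSum_Ico_one_two_pow (φ a b : ℕ → ℂ) (J : ℕ) :
    bilinearSum φ a b (Ico 1 (2 ^ J)) (Ico 1 (2 ^ J))
      = ∑ j ∈ range J, ∑ k ∈ range J,
        bilinearSum φ a b (Ico (2 ^ j) (2 * 2 ^ j)) (Ico (2 ^ k) (2 * 2 ^ k)) := by
  simp only [bilinearSum, sum_Ico_one_two_pow]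
  exact sum_congr rfl fun _ _ => sum_comm

lemma bilinearSum_eq_zero_of_left {a : ℕ → ℂ} {s : Finset ℕ} (ha : ∀ m ∈ s, a m = 0)
    (φ b : ℕ → ℂ) (t : Finset ℕ) : bilinearSum φ a b s t = 0 :=
  sum_eq_zero fun m hm => sum_eq_zero fun l _ => by rw [ha m hm, zero_mul, zero_mul]

lemma exists_norm_bilinearSum_typeII_le {c μ : ℝ} (hc1 : 1 < c) (hc2 : c ≤ 2) (hμ : 0 < μ) :
    ∃ C : ℝ, 0 < C ∧ ∀ (X θ β A B : ℝ) (a b : ℕ → ℂ) (J : ℕ), 2 ^ 16 ≤ X →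
      IsMediumFrequency c X θ → 0 ≤ A → 0 ≤ B →
      (∀ m < 2 ^ J, ‖a m‖ ≤ A) → (∀ l < 2 ^ J, ‖b l‖ ≤ B) →
      (∀ m : ℕ, (m : ℝ) ≤ X ^ (1 / 16 : ℝ) → a m = 0) →
      (∀ l : ℕ, (l : ℝ) ≤ X ^ (1 / 16 : ℝ) → b l = 0) →
      ‖bilinearSum (cutTwist c θ β ⌊μ * X⌋₊ ⌊X⌋₊) a b (Ico 1 (2 ^ J)) (Ico 1 (2 ^ J))‖
        ≤ J ^ 2 * (C * (A * B) * X ^ (31 / 32 : ℝ)) := by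
  obtain ⟨C, hC, hbox⟩ := exists_norm_bilinearSum_le hc1 hc2 hμ
  refine ⟨C, hC, fun X θ β A B a b J hX hθ hA hB ha hb ha0 hb0 => ?_⟩
  have : 0 ≤ X := by linarith
  have hvanish : ∀ {f : ℕ → ℂ}, (∀ m : ℕ, (m : ℝ) ≤ X ^ (1 / 16 : ℝ) → f m = 0) → ∀ {i : ℕ},
      ¬ X ^ (1 / 16 : ℝ) ≤ 2 * (2 ^ i : ℕ) → ∀ m ∈ Ico (2 ^ i) (2 * 2 ^ i), f m = 0 :=
    fun hf i hi m hm => hf m (le_trans (mod_cast (mem_Ico.1 hm).2.le) (not_le.1 hi).le)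
  have hlt : ∀ {i : ℕ}, i ∈ range J → ∀ m ∈ Ico (2 ^ i) (2 * 2 ^ i), m < 2 ^ J :=
    fun {i} hi m hm => (mem_Ico.1 hm).2.trans_le (by
      rw [← pow_succ']
      exact Nat.pow_le_pow_right two_pos (mem_range.1 hi))
  have hdyadic : ∀ j ∈ range J, ∀ k ∈ range J,
      ‖bilinearSum (cutTwist c θ β ⌊μ * X⌋₊ ⌊X⌋₊) a b (Ico (2 ^ j) (2 * 2 ^ j))
        (Ico (2 ^ k) (2 * 2 ^ k))‖ ≤ C * (A * B) * X ^ (31 / 32 : ℝ) := fun j hj k hk => by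
    by_cases hXj : X ^ (1 / 16 : ℝ) ≤ 2 * (2 ^ j : ℕ)
    · by_cases hXk : X ^ (1 / 16 : ℝ) ≤ 2 * (2 ^ k : ℕ)
      · exact hbox X θ β A B a b _ _ hX hθ hXj hXk hA hB (fun m hm => ha m (hlt hj m hm))
          (fun l hl => hb l (hlt hk l hl))
      · rw [bilinearSum_comm, bilinearSum_eq_zero_of_left (hvanish hb0 hXk), norm_zero]
        positivity
    · rw [bilinearSum_eq_zero_of_left (hvanish ha0 hXj), norm_zero]
      positivity
  rw [bilinearSum_Ico_one_two_pow]
  calc _ ≤ ∑ _ ∈ range J, ∑ _ ∈ range J, C * (A * B) * X ^ (31 / 32 : ℝ) :=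
        norm_sum_le_of_le _ fun j hj => norm_sum_le_of_le _ (hdyadic j hj)
    _ = _ := by
        rw [sum_const, sum_const, card_range, nsmul_eq_mul, nsmul_eq_mul]
        ring

/-! ### Type I sums -/

lemma sqrt_le_rpow_and_div_sqrt_le_rpow {X T : ℝ} (hX : 1 ≤ X)
    (hT : T ∈ Set.Icc (X ^ (11 / 32 : ℝ)) (X ^ (38 / 32 : ℝ))) :
    √T ≤ X ^ (53 / 64 : ℝ) ∧ X / √T ≤ X ^ (53 / 64 : ℝ) := by
  have hX0 : 0 < X := by linarith
  have hlow : X ^ (11 / 64 : ℝ) ≤ √T := le_sqrt_of_sq_le (by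
    rw [← rpow_mul_natCast hX0.le, show (11 / 64 : ℝ) * (2 : ℕ) = 11 / 32 by norm_num]
    exact hT.1)
  refine ⟨sqrt_le_iff.2 ⟨by positivity, hT.2.trans ?_⟩, ?_⟩
  · rw [← rpow_mul_natCast hX0.le]
    exact rpow_le_rpow_of_exponent_le hX (by norm_num)
  · rw [div_le_iff₀ (hlow.trans_lt' (by positivity))]
    calc X = X ^ (53 / 64 : ℝ) * X ^ (11 / 64 : ℝ) := by rw [← rpow_add hX0]; norm_num
      _ ≤ _ := by gcongr

lemma exists_norm_sum_twist_mul_le {c μ : ℝ} (hc1 : 1 < c) (hc2 : c ≤ 2) (hμ : 0 < μ) :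
    ∃ C : ℝ, 0 < C ∧ ∀ (X θ β : ℝ) (m k : ℕ), 1 ≤ X → IsMediumFrequency c X θ → 1 ≤ m →
      (m : ℝ) ≤ μ * X → k ≤ ⌊X⌋₊ / m + 1 →
      ‖∑ l ∈ Ico (⌊μ * X⌋₊ / m + 1) k, twist c θ β (l * m)‖ ≤ C * X ^ (53 / 64 : ℝ) := by
  obtain ⟨C, hC, htwist⟩ := exists_norm_sum_twist_Ico_le (R := 1 / μ + 1) hc1 hc2 (by positivity)
  set ν : ℝ := μ ^ c with hν
  have hν0 : 0 < ν := by positivity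
  refine ⟨C * (√ν + μ / √ν), by positivity, fun X θ β m k hX hθ hm hmX hk => ?_⟩
  have hX0 : 0 < X := by linarith
  have hm0 : (0 : ℝ) < m := mod_cast hm
  have hstart : μ * X / m ≤ (⌊μ * X⌋₊ / m + 1 : ℕ) := by
    have h := Nat.lt_mul_div_succ ⌊μ * X⌋₊ hm
    rw [Nat.floor_lt (by positivity)] at h
    rw [div_le_iff₀' hm0]
    exact_mod_cast h.le
  have hone : 1 ≤ μ * X / m := by rwa [le_div_iff₀ hm0, one_mul]
  have hend : (k : ℝ) ≤ (1 / μ + 1) * (μ * X / m) := by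
    have hdiv : ((⌊X⌋₊ / m : ℕ) : ℝ) ≤ X / m :=
      Nat.cast_div_le.trans (div_le_div_of_nonneg_right (Nat.floor_le hX0.le) hm0.le)
    calc (k : ℝ) ≤ (⌊X⌋₊ / m : ℕ) + 1 := mod_cast hk
      _ ≤ X / m + μ * X / m := add_le_add hdiv hone
      _ = _ := by field_simp
  have hsize : |θ * (m : ℝ) ^ c| * (μ * X / m) ^ c = ν * (|θ| * X ^ c) := by
    rw [abs_mul, abs_of_nonneg (by positivity : 0 ≤ (m : ℝ) ^ c),
      div_rpow (by positivity) hm0.le, mul_rpow hμ.le hX0.le, hν]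
    field_simp
  have hsum := htwist (θ * (m : ℝ) ^ c) (β * m) (μ * X / m) _ k
    (mul_ne_zero (hθ.ne_zero hX0) (by positivity)) hone hstart hend
  obtain ⟨hsqrt, hdiv⟩ := sqrt_le_rpow_and_div_sqrt_le_rpow hX hθ
  rw [hsize, sqrt_mul hν0.le] at hsum
  simp only [twist_mul]
  calc _ ≤ C * (√ν * √(|θ| * X ^ c) + μ * X / m / (√ν * √(|θ| * X ^ c))) := hsum
    _ ≤ C * (√ν * √(|θ| * X ^ c) + μ * X / (√ν * √(|θ| * X ^ c))) := by
        gcongr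
        exact div_le_self (by positivity) (mod_cast hm)
    _ = C * (√ν * √(|θ| * X ^ c) + μ / √ν * (X / √(|θ| * X ^ c))) := by rw [mul_div_mul_comm]
    _ ≤ C * (√ν * X ^ (53 / 64 : ℝ) + μ / √ν * X ^ (53 / 64 : ℝ)) := by gcongr
    _ = _ := by ring

lemma sum_mul_cutTwist_mul_eq (c θ β : ℝ) {m n₁ n₂ K : ℕ} (hm : 1 ≤ m) (hK : n₂ < K)
    (g : ℕ → ℂ) : ∑ l ∈ Ico 1 K, g l * cutTwist c θ β n₁ n₂ (m * l)
      = ∑ l ∈ Ico (n₁ / m + 1) (n₂ / m + 1), g l * twist c θ β (l * m) := by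
  have hrange : ∀ l, (n₁ < m * l ∧ m * l ≤ n₂) ↔ l ∈ Ico (n₁ / m + 1) (n₂ / m + 1) := fun l => by
    rw [mem_Ico, Nat.add_one_le_iff, Nat.lt_add_one_iff, Nat.div_lt_iff_lt_mul hm,
      Nat.le_div_iff_mul_le hm, mul_comm]
  have hsub : Ico (n₁ / m + 1) (n₂ / m + 1) ⊆ Ico 1 K :=
    Ico_subset_Ico (Nat.le_add_left _ _) ((Nat.div_le_self n₂ m).trans_lt hK)
  rw [← sum_subset hsub fun l _ hl => by rw [cutTwist_eq_zero (mt (hrange l).1 hl), mul_zero]]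
  exact sum_congr rfl fun l hl => by rw [cutTwist_eq_twist ((hrange l).2 hl), mul_comm m]

lemma exists_norm_sum_mul_cutTwist_mul_le {c μ : ℝ} (hc1 : 1 < c) (hc2 : c ≤ 2) (hμ : 0 < μ) :
    ∃ C : ℝ, 0 < C ∧ ∀ (X θ β G : ℝ) (w : ℕ → ℝ) (m K : ℕ), 1 ≤ X →
      IsMediumFrequency c X θ → 0 ≤ G → 1 ≤ m → (m : ℝ) ≤ μ * X → ⌊X⌋₊ < K →
      (∀ l, 1 ≤ l → w l ≤ w (l + 1)) → (∀ l, 1 ≤ l → l ≤ ⌊X⌋₊ → |w l| ≤ G) →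
      ‖∑ l ∈ Ico 1 K, (w l : ℂ) * cutTwist c θ β ⌊μ * X⌋₊ ⌊X⌋₊ (m * l)‖
        ≤ C * G * X ^ (53 / 64 : ℝ) := by
  obtain ⟨C, hC, hinner⟩ := exists_norm_sum_twist_mul_le hc1 hc2 hμ
  refine ⟨3 * C, by positivity, fun X θ β G w m K hX hθ hG hm hmX hK hw hwG => ?_⟩
  have hpartial : ∀ k ≤ ⌊X⌋₊ / m + 1, _ := fun k => hinner X θ β m k hX hθ hm hmX
  have hdiv : ⌊X⌋₊ / m ≤ ⌊X⌋₊ := Nat.div_le_self _ _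
  rw [sum_mul_cutTwist_mul_eq c θ β hm hK, sum_Ico_eq_sum_range]
  generalize ⌊μ * X⌋₊ / m = q₁ at *
  generalize ⌊X⌋₊ / m = q₂ at *
  refine (norm_sum_range_mul_le_of_monotone (A := C * X ^ (53 / 64 : ℝ)) (B := G)
    (w := fun i => w (q₁ + 1 + i)) (fun i _ => hw _ (by omega)) hG
    (fun i hi => hwG _ (by omega) (by omega)) fun k hk => ?_).trans_eq (by ring)
  rcases k.eq_zero_or_pos with rfl | hk0
  · rw [sum_range_zero, norm_zero]
    positivity
  · have h := hpartial (q₁ + 1 + k) (by omega)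
    rwa [sum_Ico_eq_sum_range, Nat.add_sub_cancel_left] at h

lemma card_filter_natCast_le_le {x : ℝ} (hx : 0 ≤ x) (K : ℕ) :
    #{m ∈ Ico 1 K | ((m : ℕ) : ℝ) ≤ x} ≤ x := by
  have hsub : {m ∈ Ico 1 K | ((m : ℕ) : ℝ) ≤ x} ⊆ Ioc 0 ⌊x⌋₊ := fun m hm =>
    mem_Ioc.2 ⟨(mem_Ico.1 (mem_filter.1 hm).1).1, Nat.le_floor (mem_filter.1 hm).2⟩
  have hcard := card_le_card hsub
  rw [Nat.card_Ioc, Nat.sub_zero] at hcard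
  exact (Nat.cast_le.2 hcard).trans (Nat.floor_le hx)

lemma exists_norm_bilinearSum_typeI_le {c μ : ℝ} (hc1 : 1 < c) (hc2 : c ≤ 2) (hμ : 0 < μ) :
    ∃ C : ℝ, 0 < C ∧ ∀ (X θ β F G : ℝ) (f w : ℕ → ℝ) (K : ℕ), 1 ≤ X →
      X ^ (1 / 8 : ℝ) ≤ μ * X → IsMediumFrequency c X θ → 0 ≤ G → ⌊X⌋₊ < K →
      (∀ m, |f m| ≤ F) → (∀ m : ℕ, X ^ (1 / 8 : ℝ) < m → f m = 0) →
      (∀ l, 1 ≤ l → w l ≤ w (l + 1)) → (∀ l, 1 ≤ l → l ≤ ⌊X⌋₊ → |w l| ≤ G) →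
      ‖bilinearSum (cutTwist c θ β ⌊μ * X⌋₊ ⌊X⌋₊) (fun m => f m) (fun l => w l)
        (Ico 1 K) (Ico 1 K)‖ ≤ C * (F * G) * X ^ (31 / 32 : ℝ) := by
  obtain ⟨C, hC, hlong⟩ := exists_norm_sum_mul_cutTwist_mul_le hc1 hc2 hμ
  refine ⟨C, hC, fun X θ β F G f w K hX hμX hθ hG hK hf hf0 hw hwG => ?_⟩
  have hX0 : 0 < X := by linarith
  have hF : 0 ≤ F := (abs_nonneg _).trans (hf 0)
  have hrow : ∀ m ∈ Ico 1 K,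
      ‖∑ l ∈ Ico 1 K, (f m : ℂ) * (w l : ℂ) * cutTwist c θ β ⌊μ * X⌋₊ ⌊X⌋₊ (m * l)‖
        ≤ if (m : ℝ) ≤ X ^ (1 / 8 : ℝ) then F * (C * G * X ^ (53 / 64 : ℝ)) else 0 :=
      fun m hm => by
    simp_rw [mul_assoc (f m : ℂ)]
    rw [← mul_sum, norm_mul, Complex.norm_real, norm_eq_abs]
    split_ifs with hmX
    · exact mul_le_mul (hf m) (hlong X θ β G w m K hX hθ hG (mem_Ico.1 hm).1 (hmX.trans hμX) hK
        hw hwG) (norm_nonneg _) hF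
    · rw [hf0 m (not_le.1 hmX), abs_zero, zero_mul]
  refine (norm_sum_le_of_le _ hrow).trans ?_
  rw [← sum_filter, sum_const, nsmul_eq_mul]
  calc _ ≤ X ^ (1 / 8 : ℝ) * (F * (C * G * X ^ (53 / 64 : ℝ))) := by
        gcongr
        exact card_filter_natCast_le_le (by positivity) K
    _ = C * (F * G) * X ^ (61 / 64 : ℝ) := by
        rw [show (61 / 64 : ℝ) = 1 / 8 + 53 / 64 by norm_num, rpow_add hX0]
        ring
    _ ≤ _ := mul_le_mul_of_nonneg_left (rpow_le_rpow_of_exponent_le hX (by norm_num))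
        (by positivity)

/-! ### Vaughan's identity -/

section Vaughan

open ArithmeticFunction hiding log
open ArithmeticFunction.zeta

/-- The restriction of an arithmetic function to the arguments `n ≤ U`. -/
noncomputable def truncLow (U : ℝ) (f : ArithmeticFunction ℝ) : ArithmeticFunction ℝ :=
  ⟨fun n => if (n : ℝ) ≤ U then f n else 0, by simp⟩

lemma truncLow_eq_zero {U : ℝ} {n : ℕ} (hn : U < n) (f : ArithmeticFunction ℝ) :
    truncLow U f n = 0 := if_neg hn.not_ge

lemma sub_truncLow_eq_zero {U : ℝ} {n : ℕ} (hn : n ≤ U) (f : ArithmeticFunction ℝ) :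
    (f - truncLow U f) n = 0 := by
  rw [sub_eq_add_neg, ArithmeticFunction.add_apply, ArithmeticFunction.neg_apply, truncLow,
    coe_mk, if_pos hn, add_neg_cancel]

lemma abs_truncLow_le (U : ℝ) (f : ArithmeticFunction ℝ) (n : ℕ) :
    |truncLow U f n| ≤ |f n| := by
  rw [truncLow, coe_mk]
  split_ifs
  · rfl
  · rw [abs_zero]; positivity

lemma abs_sub_truncLow_le (U : ℝ) (f : ArithmeticFunction ℝ) (n : ℕ) :
    |(f - truncLow U f) n| ≤ |f n| := by
  rcases le_or_gt (n : ℝ) U with hn | hn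
  · rw [sub_truncLow_eq_zero hn, abs_zero]; positivity
  · rw [sub_eq_add_neg, ArithmeticFunction.add_apply, ArithmeticFunction.neg_apply,
      truncLow_eq_zero hn, neg_zero, add_zero]

lemma truncLow_mul_truncLow_eq_zero {U : ℝ} {n : ℕ} (hU : 0 ≤ U) (hn : U * U < n)
    (f g : ArithmeticFunction ℝ) : (truncLow U f * truncLow U g) n = 0 := by
  rw [mul_apply]
  refine sum_eq_zero fun x hx => ?_
  rcases lt_or_ge U x.1 with h₁ | h₁
  · rw [truncLow_eq_zero h₁, zero_mul]
  rcases lt_or_ge U x.2 with h₂ | h₂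
  · rw [truncLow_eq_zero h₂, mul_zero]
  have hle : (x.1 : ℝ) * x.2 ≤ U * U := mul_le_mul h₁ h₂ (Nat.cast_nonneg _) hU
  rw [← (Nat.mem_divisorsAntidiagonal.1 hx).1, Nat.cast_mul] at hn
  exact absurd hle hn.not_ge

lemma vonMangoldt_eq_vaughan (U : ℝ) :
    Λ = truncLow U Λ + truncLow U (moebius : ArithmeticFunction ℝ) * ArithmeticFunction.log
      - truncLow U (moebius : ArithmeticFunction ℝ) * truncLow U Λ * (ζ : ArithmeticFunction ℝ)
      + ((moebius : ArithmeticFunction ℝ) - truncLow U (moebius : ArithmeticFunction ℝ))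
        * ((Λ - truncLow U Λ) * (ζ : ArithmeticFunction ℝ)) := by
  rw [← vonMangoldt_mul_zeta]
  linear_combination (Λ - truncLow U Λ) *
    -(coe_moebius_mul_coe_zeta (R := ℝ) : (moebius : ArithmeticFunction ℝ) * ζ = 1)

lemma abs_moebius_le (n : ℕ) : |(moebius : ArithmeticFunction ℝ) n| ≤ 1 := by
  rw [intCoe_apply]
  exact_mod_cast abs_moebius_le_one

lemma abs_truncLow_moebius_mul_truncLow_vonMangoldt_le (U : ℝ) (n : ℕ) :
    |(truncLow U (moebius : ArithmeticFunction ℝ) * truncLow U Λ) n| ≤ log n := by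
  rw [← vonMangoldt_sum, mul_apply, Nat.sum_divisorsAntidiagonal' fun i j =>
    truncLow U (moebius : ArithmeticFunction ℝ) i * truncLow U Λ j]
  refine (abs_sum_le_sum_abs _ _).trans (sum_le_sum fun d _ => ?_)
  rw [abs_mul]
  calc _ ≤ 1 * |Λ d| := mul_le_mul ((abs_truncLow_le ..).trans (abs_moebius_le _))
        (abs_truncLow_le ..) (abs_nonneg _) zero_le_one
    _ = Λ d := by rw [one_mul, abs_of_nonneg vonMangoldt_nonneg]

lemma abs_sub_truncLow_vonMangoldt_mul_zeta_le (U : ℝ) (n : ℕ) :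
    |((Λ - truncLow U Λ) * (ζ : ArithmeticFunction ℝ)) n| ≤ log n := by
  rw [← vonMangoldt_sum, coe_mul_zeta_apply]
  refine (abs_sum_le_sum_abs _ _).trans (sum_le_sum fun d _ => ?_)
  exact (abs_sub_truncLow_le ..).trans_eq (abs_of_nonneg vonMangoldt_nonneg)

lemma sub_truncLow_mul_zeta_eq_zero {U : ℝ} {n : ℕ} (hn : n ≤ U) (f : ArithmeticFunction ℝ) :
    ((f - truncLow U f) * (ζ : ArithmeticFunction ℝ)) n = 0 := by
  rw [coe_mul_zeta_apply]
  exact sum_eq_zero fun d hd =>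
    sub_truncLow_eq_zero (le_trans (mod_cast Nat.divisor_le hd) hn) f

/-- The sum over `n₁ < n ≤ n₂` of an arithmetic function against the phase `twist c θ β`. -/
noncomputable def twistSum (c θ β : ℝ) (n₁ n₂ : ℕ) (f : ArithmeticFunction ℝ) : ℂ :=
  ∑ n ∈ Ioc n₁ n₂, (f n : ℂ) * twist c θ β n

lemma twistSum_mul (c θ β : ℝ) {n₁ n₂ K : ℕ} (hK : n₂ < K) (f g : ArithmeticFunction ℝ) :
    twistSum c θ β n₁ n₂ (f * g)
      = bilinearSum (cutTwist c θ β n₁ n₂) (fun m => f m) (fun l => g l) (Ico 1 K) (Ico 1 K) := by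
  have hIco : Ioc 0 (K - 1) = Ico 1 K := by
    ext n
    simp only [mem_Ioc, mem_Ico]
    omega
  have hterm : ∀ n ∈ Ioc n₁ n₂, ((f * g) n : ℂ) * twist c θ β n
      = ∑ x ∈ Ico 1 K ×ˢ Ico 1 K,
        if x.1 * x.2 = n then (f x.1 : ℂ) * g x.2 * twist c θ β (x.1 * x.2) else 0 := fun n hn => by
    obtain ⟨hn₁, hn₂⟩ := mem_Ioc.1 hn
    rw [mul_apply, Nat.divisorsAntidiagonal_eq_prod_filter_of_le (N := K - 1) (by omega) (by omega),
      hIco, ← sum_filter, Complex.ofReal_sum, sum_mul]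
    refine sum_congr rfl fun x hx => ?_
    rw [(mem_filter.1 hx).2, Complex.ofReal_mul]
  rw [twistSum, sum_congr rfl hterm, sum_comm, sum_product, bilinearSum]
  refine sum_congr rfl fun m _ => sum_congr rfl fun l _ => ?_
  rw [sum_ite_eq]
  split_ifs with h
  · rw [cutTwist_eq_twist (mem_Ioc.1 h)]
  · rw [cutTwist_eq_zero (mt mem_Ioc.2 h), mul_zero]

lemma twistSum_vonMangoldt_eq (c θ β : ℝ) {U : ℝ} {n₁ : ℕ} (hU : U < n₁ + 1) (n₂ : ℕ) :
    twistSum c θ β n₁ n₂ Λ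
      = twistSum c θ β n₁ n₂ (truncLow U (moebius : ArithmeticFunction ℝ) * ArithmeticFunction.log)
      - twistSum c θ β n₁ n₂ (truncLow U (moebius : ArithmeticFunction ℝ) * truncLow U Λ
          * (ζ : ArithmeticFunction ℝ))
      + twistSum c θ β n₁ n₂ (((moebius : ArithmeticFunction ℝ)
          - truncLow U (moebius : ArithmeticFunction ℝ))
          * ((Λ - truncLow U Λ) * (ζ : ArithmeticFunction ℝ))) := by
  simp only [twistSum]
  rw [← sum_sub_distrib, ← sum_add_distrib]
  refine sum_congr rfl fun n hn => ?_
  have hUn : U < n := hU.trans_le (mod_cast (mem_Ioc.1 hn).1)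
  have hvaughan := congrArg (· n) (vonMangoldt_eq_vaughan U)
  simp only [sub_eq_add_neg (G := ArithmeticFunction ℝ) (_ + _), ArithmeticFunction.add_apply,
    ArithmeticFunction.neg_apply, truncLow_eq_zero hUn, zero_add] at hvaughan
  rw [hvaughan]
  push_cast
  ring

lemma exists_norm_twistSum_truncLow_moebius_mul_log_le {c μ : ℝ} (hc1 : 1 < c) (hc2 : c ≤ 2)
    (hμ : 0 < μ) : ∃ C : ℝ, 0 < C ∧ ∀ X θ β : ℝ, 1 ≤ X → X ^ (1 / 8 : ℝ) ≤ μ * X →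
      IsMediumFrequency c X θ →
      ‖twistSum c θ β ⌊μ * X⌋₊ ⌊X⌋₊
        (truncLow (X ^ (1 / 16 : ℝ)) (moebius : ArithmeticFunction ℝ) * ArithmeticFunction.log)‖
        ≤ C * log X * X ^ (31 / 32 : ℝ) := by
  obtain ⟨C, hC, htypeI⟩ := exists_norm_bilinearSum_typeI_le hc1 hc2 hμ
  refine ⟨C, hC, fun X θ β hX hμX hθ => ?_⟩
  have hU : X ^ (1 / 16 : ℝ) ≤ X ^ (1 / 8 : ℝ) := rpow_le_rpow_of_exponent_le hX (by norm_num)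
  rw [twistSum_mul c θ β (Nat.lt_succ_self _), ← one_mul (log X)]
  refine htypeI X θ β 1 (log X) _ _ _ hX hμX hθ (log_nonneg hX) (Nat.lt_succ_self _)
    (fun m => (abs_truncLow_le ..).trans (abs_moebius_le m))
    (fun m hm => truncLow_eq_zero (hU.trans_lt hm) _) (fun l hl => ?_) fun l hl hlX => ?_
  · rw [log_apply, log_apply]
    exact log_le_log (mod_cast hl) (mod_cast l.le_succ)
  · rw [log_apply, abs_of_nonneg (log_nonneg (mod_cast hl))]
    exact log_le_log (mod_cast hl) ((Nat.le_floor_iff (by linarith)).1 hlX)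

lemma log_natCast_le_of_le {x y : ℝ} {n : ℕ} (hx : (n : ℝ) ≤ x) (hy : 0 ≤ log y) (hxy : x ≤ y) :
    log n ≤ log y := by
  rcases n.eq_zero_or_pos with rfl | hn
  · simpa using hy
  · exact log_le_log (mod_cast hn) (hx.trans hxy)

lemma exists_norm_twistSum_truncLow_mul_truncLow_mul_zeta_le {c μ : ℝ} (hc1 : 1 < c)
    (hc2 : c ≤ 2) (hμ : 0 < μ) :
    ∃ C : ℝ, 0 < C ∧ ∀ X θ β : ℝ, 1 ≤ X → X ^ (1 / 8 : ℝ) ≤ μ * X → IsMediumFrequency c X θ →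
      ‖twistSum c θ β ⌊μ * X⌋₊ ⌊X⌋₊
        (truncLow (X ^ (1 / 16 : ℝ)) (moebius : ArithmeticFunction ℝ)
          * truncLow (X ^ (1 / 16 : ℝ)) Λ * (ζ : ArithmeticFunction ℝ))‖
        ≤ C * log X * X ^ (31 / 32 : ℝ) := by
  obtain ⟨C, hC, htypeI⟩ := exists_norm_bilinearSum_typeI_le hc1 hc2 hμ
  refine ⟨C, hC, fun X θ β hX hμX hθ => ?_⟩
  have hX0 : 0 < X := by linarith
  have hU : X ^ (1 / 16 : ℝ) * X ^ (1 / 16 : ℝ) = X ^ (1 / 8 : ℝ) := by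
    rw [← rpow_add hX0]; norm_num
  have hsupport : ∀ m : ℕ, X ^ (1 / 8 : ℝ) < m → (truncLow (X ^ (1 / 16 : ℝ))
      (moebius : ArithmeticFunction ℝ) * truncLow (X ^ (1 / 16 : ℝ)) Λ) m = 0 := fun m hm =>
    truncLow_mul_truncLow_eq_zero (by positivity) (hU.trans_lt hm) _ _
  have hζ : ∀ l : ℕ, 1 ≤ l → (ζ : ArithmeticFunction ℝ) l = 1 := fun l hl => by
    rw [natCoe_apply, zeta_apply, if_neg (by omega), Nat.cast_one]
  rw [twistSum_mul c θ β (Nat.lt_succ_self _), ← mul_one (log X)]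
  refine htypeI X θ β (log X) 1 _ _ _ hX hμX hθ zero_le_one (Nat.lt_succ_self _) (fun m => ?_)
    hsupport (fun l hl => by rw [hζ l hl, hζ (l + 1) (by omega)])
    fun l hl _ => by rw [hζ l hl, abs_one]
  rcases lt_or_ge (X ^ (1 / 8 : ℝ)) m with hm | hm
  · rw [hsupport m hm, abs_zero]
    exact log_nonneg hX
  · exact (abs_truncLow_moebius_mul_truncLow_vonMangoldt_le _ m).trans
      (log_natCast_le_of_le hm (log_nonneg hX) (rpow_le_self_of_one_le hX (by norm_num)))

lemma exists_lt_two_pow {X : ℝ} (hX : 2 ^ 16 ≤ X) :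
    ∃ J : ℕ, ⌊X⌋₊ < 2 ^ J ∧ (2 : ℝ) ^ J ≤ X ^ 2 ∧ J ≤ 3 * log X := by
  have hfloor : ⌊X⌋₊ ≠ 0 := (Nat.floor_pos.2 (by linarith)).ne'
  have hpow : (2 : ℝ) ^ Nat.log 2 ⌊X⌋₊ ≤ X :=
    le_trans (mod_cast Nat.pow_log_le_self 2 hfloor) (Nat.floor_le (by linarith))
  refine ⟨Nat.log 2 ⌊X⌋₊ + 1, Nat.lt_pow_succ_log_self one_lt_two _, ?_, ?_⟩
  · rw [pow_succ]
    nlinarith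
  · have hlog := log_le_log (by positivity) hpow
    have hlogX := log_le_log (by norm_num) hX
    rw [log_pow] at hlog hlogX
    push_cast at hlogX ⊢
    nlinarith [log_two_gt_d9, (Nat.cast_nonneg (Nat.log 2 ⌊X⌋₊) : (0 : ℝ) ≤ _)]

lemma exists_norm_twistSum_sub_truncLow_mul_le {c μ : ℝ} (hc1 : 1 < c) (hc2 : c ≤ 2)
    (hμ : 0 < μ) : ∃ C : ℝ, 0 < C ∧ ∀ X θ β : ℝ, 2 ^ 16 ≤ X → IsMediumFrequency c X θ →
      ‖twistSum c θ β ⌊μ * X⌋₊ ⌊X⌋₊ (((moebius : ArithmeticFunction ℝ)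
          - truncLow (X ^ (1 / 16 : ℝ)) (moebius : ArithmeticFunction ℝ))
          * ((Λ - truncLow (X ^ (1 / 16 : ℝ)) Λ) * (ζ : ArithmeticFunction ℝ)))‖
        ≤ C * log X ^ 3 * X ^ (31 / 32 : ℝ) := by
  obtain ⟨C, hC, htypeII⟩ := exists_norm_bilinearSum_typeII_le hc1 hc2 hμ
  refine ⟨18 * C, by positivity, fun X θ β hX hθ => ?_⟩
  have hlogX : 0 ≤ log X := log_nonneg (by linarith)
  have : 0 ≤ X := by linarith
  obtain ⟨J, hXJ, hJX, hJ⟩ := exists_lt_two_pow hX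
  rw [twistSum_mul c θ β hXJ]
  calc _ ≤ J ^ 2 * (C * (1 * (2 * log X)) * X ^ (31 / 32 : ℝ)) := by
        refine htypeII X θ β 1 (2 * log X) _ _ J hX hθ zero_le_one (by positivity) (fun m _ => ?_)
          (fun l hl => ?_) (fun m hm => by rw [sub_truncLow_eq_zero hm, Complex.ofReal_zero])
          fun l hl => by rw [sub_truncLow_mul_zeta_eq_zero hl, Complex.ofReal_zero]
        · rw [Complex.norm_real]
          exact (abs_sub_truncLow_le ..).trans (abs_moebius_le m)
        · rw [Complex.norm_real, show 2 * log X = log (X ^ 2) by rw [log_pow]; norm_num]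
          refine (abs_sub_truncLow_vonMangoldt_mul_zeta_le _ l).trans
            (log_natCast_le_of_le (x := 2 ^ J) (mod_cast hl.le) ?_ hJX)
          rw [log_pow]
          positivity
    _ ≤ (3 * log X) ^ 2 * (C * (1 * (2 * log X)) * X ^ (31 / 32 : ℝ)) := by gcongr
    _ = _ := by ring

lemma exists_norm_twistSum_vonMangoldt_le {c μ : ℝ} (hc1 : 1 < c) (hc2 : c ≤ 2) (hμ : 0 < μ) :
    ∃ C : ℝ, 0 < C ∧ ∀ X θ β : ℝ, 2 ^ 16 ≤ X → X ^ (1 / 8 : ℝ) ≤ μ * X →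
      IsMediumFrequency c X θ →
      ‖twistSum c θ β ⌊μ * X⌋₊ ⌊X⌋₊ Λ‖ ≤ C * log X ^ 3 * X ^ (31 / 32 : ℝ) := by
  obtain ⟨C₁, hC₁, hlog⟩ := exists_norm_twistSum_truncLow_moebius_mul_log_le hc1 hc2 hμ
  obtain ⟨C₂, hC₂, hzeta⟩ := exists_norm_twistSum_truncLow_mul_truncLow_mul_zeta_le hc1 hc2 hμ
  obtain ⟨C₃, hC₃, hbilinear⟩ := exists_norm_twistSum_sub_truncLow_mul_le hc1 hc2 hμ
  refine ⟨C₁ + C₂ + C₃, by positivity, fun X θ β hX hμX hθ => ?_⟩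
  have hX1 : 1 ≤ X := by linarith
  have hlogX : log X ≤ log X ^ 3 := by
    refine le_self_pow₀ ((le_log_iff_exp_le (by linarith)).2 ?_) (by norm_num)
    linarith [exp_one_lt_d9]
  have hU : X ^ (1 / 16 : ℝ) < ⌊μ * X⌋₊ + 1 :=
    ((rpow_le_rpow_of_exponent_le hX1 (by norm_num)).trans hμX).trans_lt (Nat.lt_floor_add_one _)
  rw [twistSum_vonMangoldt_eq c θ β hU]
  calc _ ≤ C₁ * log X * X ^ (31 / 32 : ℝ) + C₂ * log X * X ^ (31 / 32 : ℝ)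
        + C₃ * log X ^ 3 * X ^ (31 / 32 : ℝ) :=
        (norm_add_le _ _).trans (add_le_add ((norm_sub_le _ _).trans (add_le_add
          (hlog X θ β hX1 hμX hθ) (hzeta X θ β hX1 hμX hθ))) (hbilinear X θ β hX hθ))
    _ ≤ C₁ * log X ^ 3 * X ^ (31 / 32 : ℝ) + C₂ * log X ^ 3 * X ^ (31 / 32 : ℝ)
        + C₃ * log X ^ 3 * X ^ (31 / 32 : ℝ) := by gcongr
    _ = _ := by ring

end Vaughan

/-! ### Fejér approximation -/

/-- The Fejér kernel of order `H`, normalised so that its values at the `K` translates of a point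
by multiples of `1 / K` sum to `1`. -/
noncomputable def fejerKernel (H K : ℕ) (t : ℝ) : ℝ :=
  1 / (K * H) * ‖∑ a ∈ range H, e (t * a)‖ ^ 2

lemma fejerKernel_nonneg (H K : ℕ) (t : ℝ) : 0 ≤ fejerKernel H K t := by
  unfold fejerKernel
  positivity

lemma ofReal_fejerKernel (H K : ℕ) (t : ℝ) : (fejerKernel H K t : ℂ)
    = 1 / (K * H) * ∑ a ∈ range H, ∑ b ∈ range H, e (t * ((a : ℤ) - b : ℤ)) := by
  rw [fejerKernel]
  push_cast
  rw [← Complex.mul_conj', map_sum, sum_mul_sum]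
  congr 1
  refine sum_congr rfl fun a _ => sum_congr rfl fun b _ => ?_
  rw [← e_neg, ← e_add]
  ring_nf

lemma fejerKernel_le {κ t : ℝ} (hκ : 0 < κ) (ht : 4 * κ ≤ ‖e t - 1‖) (H K : ℕ) :
    fejerKernel H K t ≤ 1 / (K * H) * (1 / (2 * κ)) ^ 2 := by
  have hgeom := norm_sum_range_e_mul_le (by positivity) ht H
  rw [show 2 / (4 * κ) = 1 / (2 * κ) by field_simp; norm_num] at hgeom
  unfold fejerKernel
  gcongr

lemma sum_range_e_sub_div_mul {K : ℕ} (hK : 0 < K) (y : ℝ) (h : ℤ) :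
    ∑ j ∈ range K, e ((y - j / K) * h) = if (K : ℤ) ∣ h then K * e (y * h) else 0 := by
  have hterm : ∀ j : ℕ, e ((y - j / K) * h) = e (((-h : ℤ) : ℝ) / K * j) * e (y * h) := fun j => by
    rw [← e_add]
    push_cast
    ring_nf
  simp_rw [hterm]
  rw [← sum_mul, sum_range_e_div_mul hK]
  simp only [dvd_neg, ite_mul, zero_mul]

lemma sum_range_fejerKernel {H K : ℕ} (hH : 0 < H) (hHK : H ≤ K) (y : ℝ) :
    ∑ j ∈ range K, fejerKernel H K (y - j / K) = 1 := by
  have horth : ∀ a ∈ range H, ∀ b ∈ range H,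
      ∑ j ∈ range K, e ((y - j / K) * ((a : ℤ) - b : ℤ)) = if a = b then (K : ℂ) else 0 :=
    fun a ha b hb => by
    rw [mem_range] at ha hb
    rw [sum_range_e_sub_div_mul (by omega)]
    rcases eq_or_ne a b with rfl | hab
    · simp [e_zero]
    · have hndvd : ¬(K : ℤ) ∣ (a : ℤ) - b := fun hdvd => by
        have := Int.eq_zero_of_abs_lt_dvd hdvd (by rw [abs_lt]; omega)
        omega
      rw [if_neg hndvd, if_neg hab]
  have hsum : ∑ j ∈ range K, ∑ a ∈ range H, ∑ b ∈ range H, e ((y - j / K) * ((a : ℤ) - b : ℤ))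
      = (K : ℂ) * H := by
    rw [sum_comm]
    calc _ = ∑ a ∈ range H, ∑ b ∈ range H, if a = b then (K : ℂ) else 0 := by
          refine sum_congr rfl fun a ha => ?_
          rw [sum_comm]
          exact sum_congr rfl fun b hb => horth a ha b hb
      _ = ∑ _a ∈ range H, (K : ℂ) := sum_congr rfl fun a ha => by rw [sum_ite_eq, if_pos ha]
      _ = _ := by rw [sum_const, card_range, nsmul_eq_mul, mul_comm]
  apply Complex.ofReal_injective
  have hK0 : (K : ℂ) ≠ 0 := mod_cast (by omega : K ≠ 0)
  have hH0 : (H : ℂ) ≠ 0 := mod_cast hH.ne'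
  rw [Complex.ofReal_sum]
  simp_rw [ofReal_fejerKernel]
  rw [← mul_sum, hsum, Complex.ofReal_one]
  field_simp

/-- The Fourier coefficient of `u ↦ e(-αu)` on `[0, 1)` at the frequency `h`, with the integral
replaced by the average over `K` equidistant nodes. -/
noncomputable def floorCoeff (α : ℝ) (K : ℕ) (h : ℤ) : ℂ :=
  1 / K * ∑ j ∈ range K, e (-((α + h) / K) * j)

/-- The Fejér mean of order `H` built from `floorCoeff`; it approximates `y ↦ e(-α{y})`. -/
noncomputable def floorApprox (α : ℝ) (H K : ℕ) (y : ℝ) : ℂ :=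
  1 / H * ∑ a ∈ range H, ∑ b ∈ range H, floorCoeff α K ((a : ℤ) - b) * e (y * ((a : ℤ) - b : ℤ))

lemma floorApprox_eq_sum_fejerKernel (α : ℝ) (H K : ℕ) (y : ℝ) :
    floorApprox α H K y
      = ∑ j ∈ range K, (fejerKernel H K (y - j / K) : ℂ) * e (-α * (j / K)) := by
  simp_rw [floorApprox, floorCoeff, ofReal_fejerKernel, mul_sum, sum_mul, mul_sum]
  conv_rhs => rw [sum_comm]
  refine sum_congr rfl fun a _ => ?_
  rw [sum_comm]
  refine sum_congr rfl fun j _ => sum_congr rfl fun b _ => ?_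
  have hphase : e ((y - j / K) * ((a : ℤ) - b : ℤ)) * e (-α * (j / K))
      = e (-((α + ((a : ℤ) - b : ℤ)) / K) * j) * e (y * ((a : ℤ) - b : ℤ)) := by
    rw [← e_add, ← e_add]
    ring_nf
  rw [mul_assoc _ (e ((y - _) * _)), hphase]
  ring

lemma norm_e_sub_floorApprox_le_sum {H K : ℕ} (hH : 0 < H) (hHK : H ≤ K) (α u y : ℝ) :
    ‖e (-α * u) - floorApprox α H K y‖
      ≤ ∑ j ∈ range K, fejerKernel H K (y - j / K) * ‖e (-α * u) - e (-α * (j / K))‖ := by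
  have hdiff : e (-α * u) - floorApprox α H K y
      = ∑ j ∈ range K, (fejerKernel H K (y - j / K) : ℂ) * (e (-α * u) - e (-α * (j / K))) := by
    simp_rw [mul_sub]
    rw [sum_sub_distrib, ← sum_mul, ← Complex.ofReal_sum, sum_range_fejerKernel hH hHK,
      floorApprox_eq_sum_fejerKernel, Complex.ofReal_one, one_mul]
  rw [hdiff]
  refine norm_sum_le_of_le _ fun j _ => ?_
  rw [norm_mul, Complex.norm_real, norm_of_nonneg (fejerKernel_nonneg ..)]

lemma norm_e_sub_floorApprox_le_two {H K : ℕ} (hH : 0 < H) (hHK : H ≤ K) (α u y : ℝ) :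
    ‖e (-α * u) - floorApprox α H K y‖ ≤ 2 := by
  have htwo : ∀ s t, ‖e s - e t‖ ≤ 2 := fun s t =>
    (norm_sub_le _ _).trans (by rw [norm_e, norm_e, one_add_one_eq_two])
  calc _ ≤ ∑ j ∈ range K, fejerKernel H K (y - j / K) * 2 :=
        (norm_e_sub_floorApprox_le_sum hH hHK α u y).trans (sum_le_sum fun _ _ =>
          mul_le_mul_of_nonneg_left (htwo _ _) (fejerKernel_nonneg ..))
    _ = 2 := by rw [← sum_mul, sum_range_fejerKernel hH hHK, one_mul]

lemma fejerKernel_mul_norm_e_sub_e_le {α κ y : ℝ} (hα : |α| ≤ 1 / 2) (hκ : 0 < κ)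
    (hy : Int.fract y ∈ Set.Icc κ (1 - κ)) {j K : ℕ} (hj : j < K) (H : ℕ) :
    fejerKernel H K (y - j / K) * ‖e (-α * Int.fract y) - e (-α * (j / K))‖
      ≤ fejerKernel H K (y - j / K) * (π * κ) + 1 / (K * H) * (1 / (2 * κ)) ^ 2 * 2 := by
  have hnode0 : (0 : ℝ) ≤ j / K := by positivity
  have hnode1 : (j : ℝ) / K < 1 :=
    (div_lt_one (mod_cast j.zero_le.trans_lt hj)).2 (mod_cast hj)
  have hkernel := fejerKernel_nonneg H K (y - j / K)
  rcases le_or_gt |Int.fract y - j / K| κ with hnear | hfar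
  · have hsmooth : ‖e (-α * Int.fract y) - e (-α * (j / K))‖ ≤ π * κ :=
      calc _ ≤ 2 * π * (|α| * |Int.fract y - j / K|) := by
            rw [← abs_mul, mul_sub, ← abs_neg]
            refine (norm_e_sub_e_le _ _).trans_eq ?_
            ring_nf
        _ ≤ 2 * π * (1 / 2 * κ) := by gcongr
        _ = π * κ := by ring
    have : 0 ≤ 1 / (K * H) * (1 / (2 * κ)) ^ 2 * 2 := by positivity
    linarith [mul_le_mul_of_nonneg_left hsmooth hkernel]
  · have hdist : |Int.fract y - j / K| ≤ 1 - κ := abs_le.2 ⟨by linarith [hy.1], by linarith [hy.2]⟩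
    have hfrac : e (y - j / K) = e (Int.fract y - j / K) := by
      rw [← e_add_intCast (Int.fract y - j / K) ⌊y⌋, Int.fract]
      ring_nf
    have htail := fejerKernel_le hκ (hfrac ▸ four_mul_le_norm_e_sub_one hκ.le hfar.le hdist) H K
    have htwo : ‖e (-α * Int.fract y) - e (-α * (j / K))‖ ≤ 2 :=
      (norm_sub_le _ _).trans (by rw [norm_e, norm_e, one_add_one_eq_two])
    have : 0 ≤ fejerKernel H K (y - j / K) * (π * κ) := by positivity
    linarith [mul_le_mul htail htwo (norm_nonneg _) (by positivity)]

lemma norm_e_sub_floorApprox_le_of_fract_mem_Icc {α κ y : ℝ} (hα : |α| ≤ 1 / 2) (hκ : 0 < κ)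
    (hy : Int.fract y ∈ Set.Icc κ (1 - κ)) {H K : ℕ} (hH : 0 < H) (hHK : H ≤ K) :
    ‖e (-α * Int.fract y) - floorApprox α H K y‖ ≤ π * κ + 1 / (2 * H * κ ^ 2) := by
  have hK0 : (0 : ℝ) < K := mod_cast hH.trans_le hHK
  have : (0 : ℝ) < H := mod_cast hH
  calc _ ≤ ∑ j ∈ range K, (fejerKernel H K (y - j / K) * (π * κ)
          + 1 / (K * H) * (1 / (2 * κ)) ^ 2 * 2) :=
        (norm_e_sub_floorApprox_le_sum hH hHK α _ y).trans (sum_le_sum fun _ hj =>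
          fejerKernel_mul_norm_e_sub_e_le hα hκ hy (mem_range.1 hj) H)
    _ = π * κ + K * (1 / (K * H) * (1 / (2 * κ)) ^ 2 * 2) := by
        rw [sum_add_distrib, ← sum_mul, sum_range_fejerKernel hH hHK, one_mul, sum_const,
          card_range, nsmul_eq_mul]
    _ = _ := by field_simp

lemma half_le_norm_sum_range_e_mul {y : ℝ} {H : ℕ} {z : ℤ} (hz : |y - z| * H ≤ 1 / 16) :
    (H : ℝ) / 2 ≤ ‖∑ a ∈ range H, e (y * a)‖ := by
  have hterm : ∀ a ∈ range H, ‖e (y * a) - 1‖ ≤ 1 / 2 := fun a ha => by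
    have hshift : e (y * a) = e ((y - z) * a) := by
      rw [← e_add_intCast ((y - z) * a) (z * a)]
      push_cast
      ring_nf
    have haH : (a : ℝ) ≤ H := mod_cast (mem_range.1 ha).le
    calc _ ≤ 2 * π * (|y - z| * a) := by
          rw [hshift, ← abs_of_nonneg (a.cast_nonneg : (0 : ℝ) ≤ a), ← abs_mul, Nat.abs_cast]
          exact norm_e_sub_one_le _
      _ ≤ 2 * π * (|y - z| * H) := by gcongr
      _ ≤ 2 * 4 * (1 / 16) := by gcongr; exact pi_lt_four.le
      _ = 1 / 2 := by norm_num
  have hdiff : ‖(H : ℂ) - ∑ a ∈ range H, e (y * a)‖ ≤ H / 2 := by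
    have hsum := norm_sum_le_of_le _ hterm
    rw [sum_sub_distrib, sum_const, sum_const, card_range, nsmul_one, nsmul_eq_mul] at hsum
    rw [norm_sub_rev]
    linarith
  have htriangle := norm_sub_norm_le (H : ℂ) (∑ a ∈ range H, e (y * a))
  rw [Complex.norm_natCast] at htriangle
  linarith

-- The second term of the bound takes care of the jump of `e(-α{y})` at the integers.
lemma norm_e_sub_floorApprox_le {α : ℝ} (hα : |α| ≤ 1 / 2) {H K : ℕ} (hH : 1 ≤ H)
    (hK : H ^ 3 ≤ K) (y : ℝ) :
    ‖e (-α * Int.fract y) - floorApprox α (H ^ 3) K y‖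
      ≤ 129 / H + 8 / H ^ 2 * ‖∑ a ∈ range H, e (y * a)‖ ^ 2 := by
  have : (0 : ℝ) < H := mod_cast hH
  have hH3 : 0 < H ^ 3 := by positivity
  by_cases hy : Int.fract y ∈ Set.Icc (1 / (16 * H) : ℝ) (1 - 1 / (16 * H))
  · calc _ ≤ π * (1 / (16 * H)) + 1 / (2 * (H ^ 3 : ℕ) * (1 / (16 * H)) ^ 2) :=
          norm_e_sub_floorApprox_le_of_fract_mem_Icc hα (by positivity) hy hH3 hK
      _ = (π / 16 + 128) / H := by push_cast; field_simp; ring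
      _ ≤ 129 / H := by gcongr; linarith [pi_lt_four]
      _ ≤ _ := le_add_of_nonneg_right (by positivity)
  · obtain ⟨z, hz⟩ : ∃ z : ℤ, |y - z| ≤ 1 / (16 * H) := by
      have hfract := Int.fract_add_floor y
      have h0 := Int.fract_nonneg y
      have h1 := Int.fract_lt_one y
      rw [Set.mem_Icc, not_and_or, not_le, not_le] at hy
      rcases hy with hy | hy
      · exact ⟨⌊y⌋, abs_le.2 ⟨by linarith, by linarith⟩⟩
      · exact ⟨⌊y⌋ + 1, abs_le.2 ⟨by push_cast; linarith, by push_cast; linarith⟩⟩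
    have hlarge : (H : ℝ) / 2 ≤ ‖∑ a ∈ range H, e (y * a)‖ :=
      half_le_norm_sum_range_e_mul (z := z) <| by
        calc _ ≤ 1 / (16 * H) * (H : ℝ) := by gcongr
          _ = 1 / 16 := by field_simp
    calc _ ≤ (2 : ℝ) := norm_e_sub_floorApprox_le_two hH3 hK α _ y
      _ = 8 / H ^ 2 * (H / 2) ^ 2 := by field_simp; norm_num
      _ ≤ 8 / H ^ 2 * ‖∑ a ∈ range H, e (y * a)‖ ^ 2 := by gcongr
      _ ≤ _ := le_add_of_nonneg_left (by positivity)

lemma norm_floorCoeff_le_inv_max {α : ℝ} (hα : |α| ≤ 1 / 2) {K : ℕ} {h : ℤ}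
    (hK : 2 * h.natAbs + 1 ≤ K) : ‖floorCoeff α K h‖ ≤ (max 1 (h.natAbs : ℝ))⁻¹ := by
  have hK' : 2 * |(h : ℝ)| + 1 ≤ K := by
    rw [← Int.cast_abs, ← Nat.cast_natAbs]
    exact_mod_cast hK
  have hK0 : (0 : ℝ) < K := by linarith [abs_nonneg (h : ℝ)]
  rw [floorCoeff, norm_mul, norm_div, norm_one, Complex.norm_natCast]
  rcases eq_or_ne h 0 with rfl | hh
  · rw [Int.natAbs_zero, Nat.cast_zero, max_eq_left zero_le_one, inv_one, one_div_mul_eq_div,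
      div_le_one hK0]
    exact (norm_sum_le_of_le _ fun j _ => (norm_e _).le).trans_eq (by simp)
  · have hh1 : (1 : ℝ) ≤ |(h : ℝ)| := mod_cast Int.one_le_abs hh
    have hlow : |(h : ℝ)| / 2 ≤ |α + h| := by
      have := abs_sub_abs_le_abs_sub (h : ℝ) (-α)
      rw [abs_neg, sub_neg_eq_add, add_comm (h : ℝ) α] at this
      linarith
    have hfreq : |-((α + h) / K)| = |α + h| / K := by rw [abs_neg, abs_div, abs_of_pos hK0]
    have hsep : 4 * (|(h : ℝ)| / (2 * K)) ≤ ‖e (-((α + h) / K)) - 1‖ := by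
      refine four_mul_le_norm_e_sub_one (by positivity) ?_ ?_ <;> rw [hfreq]
      · rw [← div_div]
        gcongr
      · have hup : |α + h| ≤ 1 / 2 + |(h : ℝ)| := (abs_add_le _ _).trans (by gcongr)
        rw [div_le_iff₀ hK0, sub_mul, div_mul_eq_mul_div, mul_div_mul_right _ _ hK0.ne']
        linarith
    rw [Nat.cast_natAbs, Int.cast_abs, max_eq_right hh1]
    calc _ ≤ 1 / (K : ℝ) * (2 / (4 * (|(h : ℝ)| / (2 * K)))) := by
          gcongr
          exact norm_sum_range_e_mul_le (by positivity) hsep K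
      _ = _ := by field_simp; norm_num

lemma sum_norm_floorCoeff_le {α : ℝ} (hα : |α| ≤ 1 / 2) {H K : ℕ} (hK : 2 * H + 1 ≤ K) :
    ∑ a ∈ range H, ∑ b ∈ range H, ‖floorCoeff α K ((a : ℤ) - b)‖ ≤ H * (3 + 2 * log H) := by
  have hharmonic : ∑ i ∈ range H, (max 1 ((i + 1 : ℕ) : ℝ))⁻¹ ≤ 1 + log H := by
    have hmax : ∀ i : ℕ, max 1 ((i + 1 : ℕ) : ℝ) = i + 1 := fun i => by
      rw [max_eq_right (mod_cast i.succ_pos), Nat.cast_succ]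
    have hlog := harmonic_le_one_add_log H
    rw [harmonic] at hlog
    push_cast at hlog
    simpa only [hmax] using hlog
  have hrow : ∀ a ∈ range H, ∑ b ∈ range H, ‖floorCoeff α K ((a : ℤ) - b)‖ ≤ 3 + 2 * log H :=
    fun a ha => by
    rw [mem_range] at ha
    calc _ ≤ ∑ b ∈ range H, (max 1 (((a : ℤ) - b).natAbs : ℝ))⁻¹ :=
          sum_le_sum fun b hb => norm_floorCoeff_le_inv_max hα (by rw [mem_range] at hb; omega)
      _ ≤ (max 1 ((0 : ℕ) : ℝ))⁻¹ + 2 * ∑ i ∈ range H, (max 1 ((i + 1 : ℕ) : ℝ))⁻¹ :=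
          sum_range_natAbs_sub_le (g := fun n => (max 1 (n : ℝ))⁻¹) (fun n => by positivity) ha
      _ ≤ _ := by
          rw [Nat.cast_zero, max_eq_left zero_le_one, inv_one]
          linarith
  calc _ ≤ ∑ _a ∈ range H, (3 + 2 * log H) := sum_le_sum hrow
    _ = _ := by rw [sum_const, card_range, nsmul_eq_mul]

/-! ### Removing the integer part -/

lemma e_mul_floor (α y : ℝ) : e (α * ⌊y⌋) = e (α * y) * e (-α * Int.fract y) := by
  rw [← e_add, Int.fract]
  ring_nf

lemma abs_intCast_sub_le {a b H : ℕ} (ha : a ∈ range H) (hb : b ∈ range H) :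
    |(((a : ℤ) - b : ℤ) : ℝ)| ≤ H := by
  rw [mem_range] at ha hb
  exact_mod_cast (by rw [abs_le]; omega : |(a : ℤ) - b| ≤ H)

section IntegerPart

variable {ι : Type*} (s : Finset ι) (y : ι → ℝ) (z : ι → ℂ) {α W E₁ E₂ : ℝ} {H K : ℕ}

lemma norm_sum_mul_floorApprox_le (hα : |α| ≤ 1 / 2) (hH : 1 ≤ H) (hK : 2 * H + 1 ≤ K)
    (hE₁ : ∀ h : ℤ, |(h : ℝ)| ≤ H → ‖∑ n ∈ s, z n * e ((α + h) * y n)‖ ≤ E₁) :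
    ‖∑ n ∈ s, z n * e (α * y n) * floorApprox α H K (y n)‖ ≤ (3 + 2 * log H) * E₁ := by
  have hH0 : (0 : ℝ) < H := mod_cast hH
  have hE₁0 : 0 ≤ E₁ := (norm_nonneg _).trans (hE₁ 0 (by simp))
  have hexpand : ∑ n ∈ s, z n * e (α * y n) * floorApprox α H K (y n)
      = 1 / H * ∑ a ∈ range H, ∑ b ∈ range H, floorCoeff α K ((a : ℤ) - b)
        * ∑ n ∈ s, z n * e ((α + ((a : ℤ) - b : ℤ)) * y n) := by
    simp_rw [floorApprox, mul_sum]
    rw [sum_comm]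
    refine sum_congr rfl fun a _ => ?_
    rw [sum_comm]
    refine sum_congr rfl fun b _ => sum_congr rfl fun n _ => ?_
    rw [add_mul, e_add, mul_comm (((a : ℤ) - b : ℤ) : ℝ)]
    ring
  rw [hexpand, norm_mul, norm_div, norm_one, Complex.norm_natCast, one_div_mul_eq_div,
    div_le_iff₀ hH0]
  calc _ ≤ ∑ a ∈ range H, ∑ b ∈ range H, ‖floorCoeff α K ((a : ℤ) - b)‖ * E₁ := by
        refine norm_sum_le_of_le _ fun a ha => norm_sum_le_of_le _ fun b hb => ?_
        rw [norm_mul]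
        exact mul_le_mul_of_nonneg_left (hE₁ _ (abs_intCast_sub_le ha hb)) (norm_nonneg _)
    _ = (∑ a ∈ range H, ∑ b ∈ range H, ‖floorCoeff α K ((a : ℤ) - b)‖) * E₁ := by
        simp_rw [sum_mul]
    _ ≤ (H * (3 + 2 * log H)) * E₁ :=
        mul_le_mul_of_nonneg_right (sum_norm_floorCoeff_le hα hK) hE₁0
    _ = _ := by ring

lemma sum_norm_sq_sum_range_e_mul_le (hE₂0 : 0 ≤ E₂)
    (hE₂ : ∀ h : ℤ, h ≠ 0 → |(h : ℝ)| ≤ H → ‖∑ n ∈ s, e (h * y n)‖ ≤ E₂) :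
    ∑ n ∈ s, ‖∑ a ∈ range H, e (y n * a)‖ ^ 2 ≤ H * #s + H ^ 2 * E₂ := by
  have hentry : ∀ a ∈ range H, ∀ b ∈ range H, ‖∑ n ∈ s, e (y n * a) * conj (e (y n * b))‖
      ≤ (if a = b then (#s : ℝ) else 0) + E₂ := fun a ha b hb => by
    have hphase : ∀ n, e (y n * a) * conj (e (y n * b)) = e (((a : ℤ) - b : ℤ) * y n) := fun n => by
      rw [← e_neg, ← e_add]
      push_cast
      ring_nf
    simp_rw [hphase]
    split_ifs with hab
    · refine (norm_sum_le_of_le _ fun n _ => (norm_e _).le).trans ?_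
      rw [sum_const, nsmul_one]
      linarith
    · rw [zero_add]
      exact hE₂ _ (by omega) (abs_intCast_sub_le ha hb)
  calc _ ≤ ∑ a ∈ range H, ∑ b ∈ range H, ((if a = b then (#s : ℝ) else 0) + E₂) :=
        (sum_norm_sq_sum_le s (range H) fun n a => e (y n * a)).trans
          (sum_le_sum fun a ha => sum_le_sum fun b hb => hentry a ha b hb)
    _ = ∑ _a ∈ range H, ((#s : ℝ) + H * E₂) := by
        refine sum_congr rfl fun a ha => ?_
        rw [sum_add_distrib, sum_ite_eq, if_pos ha, sum_const, card_range, nsmul_eq_mul]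
    _ = _ := by
        rw [sum_const, card_range, nsmul_eq_mul]
        ring

lemma norm_sum_mul_e_sub_floorApprox_le (hα : |α| ≤ 1 / 2) (hH : 1 ≤ H) (hK : H ^ 3 ≤ K)
    (hW : 0 ≤ W) (hz : ∀ n ∈ s, ‖z n‖ ≤ W) (hE₂0 : 0 ≤ E₂)
    (hE₂ : ∀ h : ℤ, h ≠ 0 → |(h : ℝ)| ≤ H → ‖∑ n ∈ s, e (h * y n)‖ ≤ E₂) :
    ‖∑ n ∈ s, z n * e (α * y n) * (e (-α * Int.fract (y n)) - floorApprox α (H ^ 3) K (y n))‖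
      ≤ W * (137 * #s / H + 8 * E₂) := by
  have : (0 : ℝ) < H := mod_cast hH
  calc _ ≤ ∑ n ∈ s, W * (129 / H + 8 / H ^ 2 * ‖∑ a ∈ range H, e (y n * a)‖ ^ 2) := by
        refine norm_sum_le_of_le _ fun n hn => ?_
        rw [norm_mul, norm_mul, norm_e, mul_one]
        exact mul_le_mul (hz n hn) (norm_e_sub_floorApprox_le hα hH hK (y n)) (norm_nonneg _) hW
    _ = W * (#s * (129 / H) + 8 / H ^ 2 * ∑ n ∈ s, ‖∑ a ∈ range H, e (y n * a)‖ ^ 2) := by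
        rw [← mul_sum, sum_add_distrib, ← mul_sum, sum_const, nsmul_eq_mul]
    _ ≤ W * (#s * (129 / H) + 8 / H ^ 2 * (H * #s + H ^ 2 * E₂)) := by
        gcongr
        exact sum_norm_sq_sum_range_e_mul_le s y hE₂0 hE₂
    _ = _ := by field_simp; ring

lemma norm_sum_mul_e_mul_floor_le (hα : |α| ≤ 1 / 2) (hH : 1 ≤ H) (hW : 0 ≤ W)
    (hz : ∀ n ∈ s, ‖z n‖ ≤ W) (hE₂0 : 0 ≤ E₂)
    (hE₁ : ∀ h : ℤ, |(h : ℝ)| ≤ (H ^ 3 : ℕ) → ‖∑ n ∈ s, z n * e ((α + h) * y n)‖ ≤ E₁)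
    (hE₂ : ∀ h : ℤ, h ≠ 0 → |(h : ℝ)| ≤ H → ‖∑ n ∈ s, e (h * y n)‖ ≤ E₂) :
    ‖∑ n ∈ s, z n * e (α * ⌊y n⌋)‖
      ≤ (3 + 2 * log (H ^ 3 : ℕ)) * E₁ + W * (137 * #s / H + 8 * E₂) := by
  have hsplit : ∑ n ∈ s, z n * e (α * ⌊y n⌋)
      = ∑ n ∈ s, z n * e (α * y n) * floorApprox α (H ^ 3) (2 * H ^ 3 + 1) (y n)
        + ∑ n ∈ s, z n * e (α * y n)
          * (e (-α * Int.fract (y n)) - floorApprox α (H ^ 3) (2 * H ^ 3 + 1) (y n)) := by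
    rw [← sum_add_distrib]
    refine sum_congr rfl fun n _ => ?_
    rw [e_mul_floor]
    ring
  rw [hsplit]
  exact (norm_add_le _ _).trans (add_le_add
    (norm_sum_mul_floorApprox_le s y z hα (Nat.one_le_pow _ _ hH) le_rfl hE₁)
    (norm_sum_mul_e_sub_floorApprox_le s y z hα hH (by omega) hW hz hE₂0 hE₂))

end IntegerPart

lemma sixteen_le_rpow_one_div_thirtytwo {X : ℝ} (hX : 2 ^ 128 ≤ X) : 16 ≤ X ^ (1 / 32 : ℝ) := by
  rw [show (16 : ℝ) = (2 ^ 128 : ℝ) ^ (1 / 32 : ℝ) by rw [← rpow_natCast, ← rpow_mul] <;> norm_num]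
  gcongr

lemma exists_fejer_order {X : ℝ} (hX : 2 ^ 128 ≤ X) :
    ∃ H : ℕ, X ^ (1 / 32 : ℝ) ≤ H ∧ (H : ℝ) ^ 3 + 1 / 2 ≤ X ^ (1 / 8 : ℝ) := by
  have hP := sixteen_le_rpow_one_div_thirtytwo hX
  have hceil := (Nat.ceil_lt_add_one (by linarith : 0 ≤ X ^ (1 / 32 : ℝ))).le
  refine ⟨⌈X ^ (1 / 32 : ℝ)⌉₊, Nat.le_ceil _, ?_⟩
  have hP4 : X ^ (1 / 8 : ℝ) = (X ^ (1 / 32 : ℝ)) ^ 4 := by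
    rw [← rpow_mul_natCast (by linarith)]; norm_num
  rw [hP4]
  generalize X ^ (1 / 32 : ℝ) = P at *
  have hcube : 1 ≤ P ^ 3 := one_le_pow₀ (by linarith)
  calc (⌈P⌉₊ : ℝ) ^ 3 + 1 / 2 ≤ (2 * P) ^ 3 + 1 / 2 := by gcongr; linarith
    _ ≤ P * P ^ 3 := by nlinarith
    _ = P ^ 4 := by ring

lemma isMediumFrequency_of_le {c X θ : ℝ} (hc1 : 1 ≤ c) (hc2 : c ≤ 17 / 16) (hX : 1 ≤ X)
    (hlo : X ^ ((16 * c - 5) / 32 - c) ≤ |θ|) (hhi : |θ| ≤ X ^ (1 / 8 : ℝ)) :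
    IsMediumFrequency c X θ := by
  have hX0 : 0 < X := by linarith
  constructor
  · calc X ^ (11 / 32 : ℝ) ≤ X ^ ((16 * c - 5) / 32) :=
          rpow_le_rpow_of_exponent_le hX (by linarith)
      _ = X ^ ((16 * c - 5) / 32 - c) * X ^ c := by rw [← rpow_add hX0, sub_add_cancel]
      _ ≤ |θ| * X ^ c := by gcongr
  · calc |θ| * X ^ c ≤ X ^ (1 / 8 : ℝ) * X ^ (17 / 16 : ℝ) :=
          mul_le_mul hhi (rpow_le_rpow_of_exponent_le hX hc2) (by positivity) (by positivity)
      _ = X ^ (38 / 32 : ℝ) := by rw [← rpow_add hX0]; norm_num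

lemma rpow_le_half {c X : ℝ} (hc1 : 1 ≤ c) (hX : 2 ^ 128 ≤ X) :
    X ^ ((16 * c - 5) / 32 - c) ≤ 1 / 2 := by
  calc X ^ ((16 * c - 5) / 32 - c) ≤ X ^ (-(1 / 32) : ℝ) :=
        rpow_le_rpow_of_exponent_le (by linarith) (by linarith)
    _ = (X ^ (1 / 32 : ℝ))⁻¹ := rpow_neg (by linarith) _
    _ ≤ 16⁻¹ := inv_anti₀ (by norm_num) (sixteen_le_rpow_one_div_thirtytwo hX)
    _ ≤ 1 / 2 := by norm_num

lemma half_le_abs_add_intCast {α : ℝ} (hα : |α| ≤ 1 / 2) {h : ℤ} (hh : h ≠ 0) :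
    1 / 2 ≤ |α + h| := by
  have hh1 : (1 : ℝ) ≤ |(h : ℝ)| := mod_cast Int.one_le_abs hh
  have := abs_sub_abs_le_abs_sub (h : ℝ) (-α)
  rw [abs_neg, sub_neg_eq_add, add_comm (h : ℝ) α] at this
  linarith

lemma isMediumFrequency_add_intCast {c X α : ℝ} {h : ℤ} (hc1 : 1 ≤ c) (hc2 : c ≤ 17 / 16)
    (hX : 2 ^ 128 ≤ X) (hα : |α| ∈ Set.Icc (X ^ ((16 * c - 5) / 32 - c)) (1 / 2))
    (hh : |(h : ℝ)| + 1 / 2 ≤ X ^ (1 / 8 : ℝ)) : IsMediumFrequency c X (α + h) := by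
  refine isMediumFrequency_of_le hc1 hc2 (by linarith) ?_ ((abs_add_le _ _).trans ?_)
  · rcases eq_or_ne h 0 with rfl | h0
    · rw [Int.cast_zero, add_zero]
      exact hα.1
    · exact (rpow_le_half hc1 hX).trans (half_le_abs_add_intCast hα.2 h0)
  · linarith [hα.2]

lemma isMediumFrequency_intCast {c X : ℝ} {h : ℤ} (hc1 : 1 ≤ c) (hc2 : c ≤ 17 / 16)
    (hX : 2 ^ 128 ≤ X) (h0 : h ≠ 0) (hh : |(h : ℝ)| ≤ X ^ (1 / 8 : ℝ)) :
    IsMediumFrequency c X h := by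
  refine isMediumFrequency_of_le hc1 hc2 (by linarith) ((rpow_le_half hc1 hX).trans ?_) hh
  simpa using half_le_abs_add_intCast (α := 0) (by simp) h0

lemma exists_norm_sum_Ioc_e_mul_rpow_le {c μ : ℝ} (hc1 : 1 < c) (hc2 : c ≤ 2) (hμ : 0 < μ) :
    ∃ C : ℝ, 0 < C ∧ ∀ X θ : ℝ, 1 ≤ X → 1 ≤ μ * X → IsMediumFrequency c X θ →
      ‖∑ n ∈ Ioc ⌊μ * X⌋₊ ⌊X⌋₊, e (θ * (n : ℝ) ^ c)‖ ≤ C * X ^ (53 / 64 : ℝ) := by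
  obtain ⟨C, hC, htwist⟩ := exists_norm_sum_twist_mul_le hc1 hc2 hμ
  refine ⟨C, hC, fun X θ hX hμX hθ => ?_⟩
  have hsum := htwist X θ 0 1 (⌊X⌋₊ + 1) hX hθ le_rfl (by simpa using hμX) (by simp)
  rw [Nat.div_one, Ico_add_one_add_one_eq_Ioc] at hsum
  simpa only [twist, mul_one, zero_mul, add_zero] using hsum

lemma one_le_log_of_two_pow_le {X : ℝ} (hX : 2 ^ 128 ≤ X) : 1 ≤ log X := by
  rw [le_log_iff_exp_le (by linarith)]
  linarith [exp_one_lt_three]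

lemma vonMangoldt_le_log_of_mem_Ioc {X : ℝ} {m n : ℕ} (hn : n ∈ Ioc m ⌊X⌋₊) :
    ArithmeticFunction.vonMangoldt n ≤ log X := by
  obtain ⟨hmn, hnX⟩ := mem_Ioc.1 hn
  have hn0 : 0 < n := by omega
  exact ArithmeticFunction.vonMangoldt_le_log.trans
    (log_le_log (mod_cast hn0) ((Nat.le_floor_iff' hn0.ne').1 hnX))

lemma card_Ioc_floor_div_le {X H : ℝ} (hX : 1 ≤ X) (hH : X ^ (1 / 32 : ℝ) ≤ H) (m : ℕ) :
    #(Ioc m ⌊X⌋₊) / H ≤ X ^ (31 / 32 : ℝ) := by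
  have hX0 : 0 < X := by linarith
  have hcard : (#(Ioc m ⌊X⌋₊) : ℝ) ≤ X := by
    rw [Nat.card_Ioc]
    exact (Nat.cast_le.2 (Nat.sub_le _ _)).trans (Nat.floor_le hX0.le)
  calc #(Ioc m ⌊X⌋₊) / H ≤ X / X ^ (1 / 32 : ℝ) := by gcongr
    _ = X ^ (31 / 32 : ℝ) := by rw [← rpow_one_sub' hX0.le] <;> norm_num

lemma floor_error_le {l E Y A C₁ C₂ k : ℝ} (hl : 1 ≤ l) (hk : k ≤ l) (hC₁ : 0 ≤ C₁) (hC₂ : 0 ≤ C₂)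
    (hY : 0 ≤ Y) (hA : A ≤ Y) (hE : E ≤ Y) :
    (3 + 2 * k) * (C₁ * l ^ 3 * Y) + l * (137 * A + 8 * (C₂ * E))
      ≤ (5 * C₁ + 137 + 8 * C₂) * l ^ 4 * Y := by
  have hl4 : l ≤ l ^ 4 := le_self_pow₀ hl (by norm_num)
  calc _ ≤ (5 * l) * (C₁ * l ^ 3 * Y) + l * (137 * Y + 8 * (C₂ * Y)) := by
        gcongr
        linarith
    _ = 5 * C₁ * l ^ 4 * Y + l * (137 * Y + 8 * (C₂ * Y)) := by ring
    _ ≤ 5 * C₁ * l ^ 4 * Y + l ^ 4 * (137 * Y + 8 * (C₂ * Y)) := by gcongr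
    _ = _ := by ring

lemma exists_norm_sum_vonMangoldt_mul_e_floor_le {c μ : ℝ} (hc1 : 1 < c) (hc2 : c ≤ 17 / 16)
    (hμ : 0 < μ) :
    ∃ C : ℝ, 0 < C ∧ ∀ X α β : ℝ, 2 ^ 128 ≤ X → X ^ (1 / 8 : ℝ) ≤ μ * X →
      |α| ∈ Set.Icc (X ^ ((16 * c - 5) / 32 - c)) (1 / 2) →
      ‖∑ n ∈ Ioc ⌊μ * X⌋₊ ⌊X⌋₊,
        (ArithmeticFunction.vonMangoldt n : ℂ) * e (β * n) * e (α * ⌊(n : ℝ) ^ c⌋)‖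
      ≤ C * log X ^ 4 * X ^ (31 / 32 : ℝ) := by
  obtain ⟨C₁, hC₁, hLambda⟩ := exists_norm_twistSum_vonMangoldt_le hc1 (by linarith) hμ
  obtain ⟨C₂, hC₂, hexp⟩ := exists_norm_sum_Ioc_e_mul_rpow_le hc1 (by linarith) hμ
  refine ⟨5 * C₁ + 137 + 8 * C₂, by positivity, fun X α β hX hμX hα => ?_⟩
  have hX1 : 1 ≤ X := by linarith
  have hlog := one_le_log_of_two_pow_le hX
  obtain ⟨H, hHX, hH3⟩ := exists_fejer_order hX
  have hH : 1 ≤ H := by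
    exact_mod_cast (one_le_rpow hX1 (by norm_num : (0 : ℝ) ≤ 1 / 32)).trans hHX
  have hHH3 : (H : ℝ) ≤ H ^ 3 := le_self_pow₀ (mod_cast hH) (by norm_num)
  have hX8 : 1 ≤ X ^ (1 / 8 : ℝ) := one_le_rpow hX1 (by norm_num)
  have hfloor := norm_sum_mul_e_mul_floor_le (Ioc ⌊μ * X⌋₊ ⌊X⌋₊) (fun n => (n : ℝ) ^ c)
    (fun n => (ArithmeticFunction.vonMangoldt n : ℂ) * e (β * n)) (W := log X)
    (E₁ := C₁ * log X ^ 3 * X ^ (31 / 32 : ℝ)) (E₂ := C₂ * X ^ (53 / 64 : ℝ)) hα.2 hH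
    (by linarith)
    (fun n hn => by
      rw [norm_mul, norm_e, mul_one, Complex.norm_of_nonneg ArithmeticFunction.vonMangoldt_nonneg]
      exact vonMangoldt_le_log_of_mem_Ioc hn)
    (by positivity)
    (fun h hh => by
      push_cast at hh
      have hθ := isMediumFrequency_add_intCast (h := h) hc1.le hc2 hX hα (by linarith)
      convert hLambda X (α + h) β (by linarith) hμX hθ using 3
      rw [twistSum]
      refine sum_congr rfl fun n _ => ?_
      rw [twist, add_comm (_ * _), e_add, mul_assoc])
    (fun h h0 hh => hexp X h hX1 (hX8.trans hμX)
      (isMediumFrequency_intCast hc1.le hc2 hX h0 (by linarith)))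
  have hlogH : log (H ^ 3 : ℕ) ≤ log X := by
    refine log_le_log (mod_cast Nat.pow_pos hH) ?_
    push_cast
    linarith [rpow_le_self_of_one_le hX1 (by norm_num : (1 / 8 : ℝ) ≤ 1)]
  refine hfloor.trans ?_
  rw [mul_div_assoc]
  exact floor_error_le hlog hlogH hC₁.le hC₂.le (by positivity) (card_Ioc_floor_div_le hX1 hHX _)
    (rpow_le_rpow_of_exponent_le hX1 (by norm_num))

/-! ### The congruence condition and prime powers -/

lemma sum_filter_dvd_eq (s : Finset ℕ) (F : ℕ → ℂ) {d : ℕ} (hd : 0 < d) :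
    ∑ n ∈ s with d ∣ n + 2, F n
      = (d : ℂ)⁻¹ * ∑ a ∈ range d, e (2 * a / d) * ∑ n ∈ s, F n * e (a / d * n) := by
  have hdC : (d : ℂ) ≠ 0 := mod_cast hd.ne'
  have hphase : ∀ (n a : ℕ), e (2 * a / d) * (F n * e (a / d * n))
      = F n * e (((n + 2 : ℕ) : ℤ) / d * a) := fun n a => by
    rw [mul_left_comm, ← e_add]
    congr 2
    push_cast
    ring
  simp_rw [mul_sum (s := s), hphase]
  rw [sum_comm]
  simp_rw [← mul_sum, sum_range_e_div_mul hd, Int.natCast_dvd_natCast, mul_ite, mul_zero]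
  rw [← sum_filter, ← sum_mul]
  field_simp

lemma norm_sum_filter_dvd_le (s : Finset ℕ) (F : ℕ → ℂ) {d : ℕ} (hd : 0 < d) {E : ℝ}
    (hE : ∀ β : ℝ, ‖∑ n ∈ s, F n * e (β * n)‖ ≤ E) :
    ‖∑ n ∈ s with d ∣ n + 2, F n‖ ≤ E := by
  have hd0 : (d : ℝ) ≠ 0 := mod_cast hd.ne'
  rw [sum_filter_dvd_eq s F hd, norm_mul, norm_inv, Complex.norm_natCast]
  calc _ ≤ (d : ℝ)⁻¹ * ∑ _a ∈ range d, E := by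
        gcongr
        refine norm_sum_le_of_le _ fun a _ => ?_
        rw [norm_mul, norm_e, one_mul]
        exact hE _
    _ = E := by
        rw [sum_const, card_range, nsmul_eq_mul]
        field_simp

lemma sum_not_prime_vonMangoldt_le {X : ℝ} (hX : 1 ≤ X) {s : Finset ℕ} (hs : s ⊆ Ioc 0 ⌊X⌋₊) :
    ∑ n ∈ s with ¬ n.Prime, ArithmeticFunction.vonMangoldt n ≤ 2 * √X * log X := by
  refine le_trans ?_ (Chebyshev.psi_sub_theta_le hX)
  rw [Chebyshev.psi_sub_theta_eq_sum_not_prime]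
  exact sum_le_sum_of_subset_of_nonneg (filter_subset_filter _ hs)
    fun n _ _ => ArithmeticFunction.vonMangoldt_nonneg

lemma norm_sum_prime_log_mul_le {X : ℝ} (hX : 1 ≤ X) {s : Finset ℕ} (hs : s ⊆ Ioc 0 ⌊X⌋₊)
    {φ : ℕ → ℂ} (hφ : ∀ n, ‖φ n‖ ≤ 1) :
    ‖∑ p ∈ s with p.Prime, (log p : ℂ) * φ p‖
      ≤ ‖∑ n ∈ s, (ArithmeticFunction.vonMangoldt n : ℂ) * φ n‖ + 2 * √X * log X := by
  have hprime : ∑ p ∈ s with p.Prime, (log p : ℂ) * φ p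
      = ∑ n ∈ s with n.Prime, (ArithmeticFunction.vonMangoldt n : ℂ) * φ n :=
    sum_congr rfl fun p hp => by
      rw [ArithmeticFunction.vonMangoldt_apply_prime (mem_filter.1 hp).2]
  rw [hprime, ← sum_filter_add_sum_filter_not s Nat.Prime
    (fun n => (ArithmeticFunction.vonMangoldt n : ℂ) * φ n)]
  refine (norm_le_add_norm_add _ _).trans (add_le_add_right ?_ _)
  refine (norm_sum_le_of_le _ fun n _ => ?_).trans (sum_not_prime_vonMangoldt_le hX hs)
  rw [norm_mul, Complex.norm_of_nonneg ArithmeticFunction.vonMangoldt_nonneg]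
  exact mul_le_of_le_one_right ArithmeticFunction.vonMangoldt_nonneg (hφ n)

/-- The inner sum of `L`: the exponential sum over the primes `μ X < p ≤ X` with
`p ≡ -2 (mod d)`. -/
noncomputable def primeSum (c μ X α : ℝ) (d : ℕ) : ℂ :=
  ∑ p ∈ range (⌊X⌋₊ + 1) with Nat.Prime p ∧ μ * X < (p : ℝ) ∧ d ∣ p + 2,
    (log p : ℂ) * e (α * ⌊(p : ℝ) ^ c⌋)

lemma L_eq_sum_primeSum (c μ X D : ℝ) (lam : ℕ → ℝ) (α : ℝ) :
    L c μ X D lam α = ∑ d ∈ range (⌊D⌋₊ + 1), (lam d : ℂ) * primeSum c μ X α d := rfl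

lemma primeSum_zero (c μ X α : ℝ) : primeSum c μ X α 0 = 0 := by
  simp [primeSum]

lemma primeSum_eq_sum_Ioc {c μ X α : ℝ} (hμX : 0 ≤ μ * X) (d : ℕ) :
    primeSum c μ X α d = ∑ p ∈ {n ∈ Ioc ⌊μ * X⌋₊ ⌊X⌋₊ | d ∣ n + 2} with Nat.Prime p,
      (log p : ℂ) * e (α * ⌊(p : ℝ) ^ c⌋) := by
  refine sum_congr ?_ fun _ _ => rfl
  ext n
  simp only [mem_filter, mem_range, mem_Ioc, Nat.floor_lt hμX, Nat.lt_succ_iff]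
  tauto

lemma exists_norm_primeSum_le {c μ : ℝ} (hc1 : 1 < c) (hc2 : c ≤ 17 / 16) (hμ : 0 < μ) :
    ∃ C : ℝ, 0 < C ∧ ∀ (X α : ℝ) (d : ℕ), 2 ^ 128 ≤ X → X ^ (1 / 8 : ℝ) ≤ μ * X →
      |α| ∈ Set.Icc (X ^ ((16 * c - 5) / 32 - c)) (1 / 2) → 0 < d →
      ‖primeSum c μ X α d‖ ≤ C * log X ^ 4 * X ^ (31 / 32 : ℝ) := by
  obtain ⟨C, hC, hLambda⟩ := exists_norm_sum_vonMangoldt_mul_e_floor_le hc1 hc2 hμ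
  refine ⟨C + 2, by positivity, fun X α d hX hμX hα hd => ?_⟩
  have hX1 : 1 ≤ X := by linarith
  have hlog := one_le_log_of_two_pow_le hX
  have hsubset : {n ∈ Ioc ⌊μ * X⌋₊ ⌊X⌋₊ | d ∣ n + 2} ⊆ Ioc 0 ⌊X⌋₊ :=
    (filter_subset _ _).trans (Ioc_subset_Ioc_left (Nat.zero_le _))
  rw [primeSum_eq_sum_Ioc (by positivity)]
  calc _ ≤ C * log X ^ 4 * X ^ (31 / 32 : ℝ) + 2 * √X * log X := by
        refine (norm_sum_prime_log_mul_le hX1 hsubset fun n => (norm_e _).le).trans ?_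
        gcongr
        refine norm_sum_filter_dvd_le _ _ hd fun β => ?_
        simpa only [mul_right_comm] using hLambda X α β hX hμX hα
    _ ≤ C * log X ^ 4 * X ^ (31 / 32 : ℝ) + 2 * X ^ (31 / 32 : ℝ) * log X ^ 4 := by
        gcongr
        · rw [sqrt_eq_rpow]
          exact rpow_le_rpow_of_exponent_le hX1 (by norm_num)
        · exact le_self_pow₀ hlog (by norm_num)
    _ = _ := by ring

/-! ### The sum over sieve weights -/

lemma norm_L_le {c μ X D B α : ℝ} {lam : ℕ → ℝ} (hD : 0 ≤ D) (hB : 0 ≤ B)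
    (hlam : ∀ d, |lam d| ≤ 1)
    (hsum : ∀ d : ℕ, 0 < d → ‖primeSum c μ X α d‖ ≤ B) :
    ‖L c μ X D lam α‖ ≤ D * B := by
  rw [L_eq_sum_primeSum, sum_range_succ', primeSum_zero, mul_zero, add_zero]
  calc _ ≤ ∑ _d ∈ range ⌊D⌋₊, B := by
        refine norm_sum_le_of_le _ fun d _ => ?_
        rw [norm_mul, Complex.norm_real, norm_eq_abs]
        exact (mul_le_of_le_one_left (norm_nonneg _) (hlam _)).trans (hsum _ d.succ_pos)
    _ = ⌊D⌋₊ * B := by rw [sum_const, card_range, nsmul_eq_mul]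
    _ ≤ D * B := by gcongr; exact Nat.floor_le hD

lemma eventually_mul_log_pow_le_rpow {ε : ℝ} (hε : 0 < ε) {C : ℝ} (hC : 0 < C) (k : ℕ) :
    ∀ᶠ X : ℝ in Filter.atTop, C * log X ^ k ≤ X ^ ε := by
  filter_upwards [(isLittleO_log_rpow_rpow_atTop (k : ℝ) hε).bound (inv_pos.2 hC),
    Filter.eventually_ge_atTop 1] with X hX hX1
  rw [rpow_natCast, norm_of_nonneg (pow_nonneg (log_nonneg hX1) k), norm_of_nonneg (by positivity),
    le_inv_mul_iff₀ hC] at hX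
  exact hX

lemma eventually_rpow_le_mul {a μ : ℝ} (ha : a < 1) (hμ : 0 < μ) :
    ∀ᶠ X : ℝ in Filter.atTop, X ^ a ≤ μ * X := by
  filter_upwards [(tendsto_rpow_atTop (sub_pos.2 ha)).eventually_ge_atTop μ⁻¹,
    Filter.eventually_gt_atTop 0] with X hX hX0
  calc X ^ a = μ * (μ⁻¹ * X ^ a) := (mul_inv_cancel_left₀ hμ.ne' _).symm
    _ ≤ μ * (X ^ (1 - a) * X ^ a) := by gcongr
    _ = μ * X := by rw [← rpow_add hX0, sub_add_cancel, rpow_one]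

end

open Filter in
theorem stmt_9_general (c μ : ℝ) (hc1 : 1 < c) (hc2 : c ≤ 17 / 16) (hμ : 0 < μ) :
    ∃ ε₀ : ℝ, 0 < ε₀ ∧ ∃ X₀ : ℝ, 0 < X₀ ∧
      ∀ X : ℝ, X₀ ≤ X →
        ∀ lam : ℕ → ℝ, (∀ d, |lam d| ≤ 1) →
          ∀ α : ℝ, X ^ ((16 * c - 5) / 32 - c) ≤ |α| → |α| ≤ 1 / 2 →
            ‖L c μ X (X ^ ((17 - 16 * c) / 32)) lam α‖ ≤ X ^ (1 - ε₀) := by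
  obtain ⟨C, hC, hprime⟩ := exists_norm_primeSum_le hc1 hc2 hμ
  -- `31 / 32 + (17 - 16 c) / 32 = 1 - (c - 1) / 2`, and half of the saving absorbs the logarithms.
  obtain ⟨X₀, hX₀⟩ := eventually_atTop.1 <|
    (eventually_mul_log_pow_le_rpow (by linarith : 0 < (c - 1) / 4) hC 4).and <|
      (eventually_rpow_le_mul (by norm_num : (1 / 8 : ℝ) < 1) hμ).and <|
        eventually_ge_atTop (2 ^ 128)
  refine ⟨(c - 1) / 4, by linarith, max X₀ 1, by positivity, fun X hX lam hlam α hα1 hα2 => ?_⟩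
  obtain ⟨hlog, hμX, hX128⟩ := hX₀ X ((le_max_left _ _).trans hX)
  have hX0 : 0 < X := by linarith
  calc _ ≤ X ^ ((17 - 16 * c) / 32) * (C * Real.log X ^ 4 * X ^ (31 / 32 : ℝ)) :=
        norm_L_le (by positivity) (by positivity) hlam
          fun d hd => hprime X α d hX128 hμX ⟨hα1, hα2⟩ hd
    _ ≤ X ^ ((17 - 16 * c) / 32) * (X ^ ((c - 1) / 4) * X ^ (31 / 32 : ℝ)) := by gcongr
    _ = X ^ (1 - (c - 1) / 4) := by
        rw [← Real.rpow_add hX0, ← Real.rpow_add hX0]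
        ring_nf

theorem stmt_9 (c μ : ℝ) (hc1 : 1 < c) (hc2 : c < 17 / 16) (hμ1 : 0 < μ) (hμ2 : μ < 1) :
    ∃ ε₀ : ℝ, 0 < ε₀ ∧ ∃ X₀ : ℝ, 0 < X₀ ∧
      ∀ X : ℝ, X₀ ≤ X →
        ∀ lam : ℕ → ℝ, IsSieveWeight (X ^ ((17 - 16 * c) / 32)) lam →
          ∀ α : ℝ, X ^ ((16 * c - 5) / 32 - c) ≤ |α| → |α| ≤ 1 / 2 →
            ‖L c μ X (X ^ ((17 - 16 * c) / 32)) lam α‖ ≤ X ^ (1 - ε₀) := by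
  obtain ⟨ε₀, hε₀, X₀, hX₀, hL⟩ := stmt_9_general c μ hc1 hc2.le hμ1
  exact ⟨ε₀, hε₀, X₀, hX₀, fun X hX lam hlam => hL X hX lam hlam.1⟩
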